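/- arXiv:1711.02337 — 2 statements merged into one kernel-verified Lean document; each statement's English description precedes it below -/
import Mathlib

section
/- Let wt and w̃t be weight functions from ℤ×ℕ to a field with w̃t(p) ≠ 0 for all p. For 1 ≤ i, j ≤ k let A_i = (−n−2i+2, 0), B_j = (n+2j−2, 0), and d_n^{i,j} = Σ_{D∈Dyck(A_i→B_j)} wt_V(D). Then det(d_n^{i,j})_{i,j=1}^k = Σ over all tuples (D_1 ≤ D_2 ≤ ⋯ ≤ D_k) ∈ Dyck^k_{2n} of wt_V(D_1)⋯wt_V(D_k) · Π_{i=1}^{k−1} Π_{p∈D_i∩D_{i+1}} (1 − 1/w̃t(p)). -/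
open Finset

attribute [local instance 10] Classical.propDecidable

noncomputable section

namespace Paper

/-! ### Words and permutation statistics (all words are 1-based). -/

/-- The word (one-line notation, 1-based) of a permutation of `{1, …, N}`:
`word π i = π(i)` for `1 ≤ i ≤ N`, and `0` otherwise. -/
def word {N : ℕ} (π : Equiv.Perm (Fin N)) (i : ℕ) : ℕ :=
  if h : 1 ≤ i ∧ i ≤ N then (π ⟨i - 1, by omega⟩ : ℕ) + 1 else 0

/-- The major index of a word of length `N`: the sum of the descents. -/
def majW (N : ℕ) (w : ℕ → ℕ) : ℕ :=
  ∑ i ∈ Finset.Icc 1 (N - 1), if w (i + 1) < w i then i else 0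

/-- The number of inversions of a word of length `N`. -/
def invW (N : ℕ) (w : ℕ → ℕ) : ℕ :=
  (((Finset.Icc 1 N) ×ˢ (Finset.Icc 1 N)).filter
    fun p => p.1 < p.2 ∧ w p.2 < w p.1).card

/-- The number of descents of a word of length `m`. -/
def desW (m : ℕ) (w : ℕ → ℕ) : ℕ :=
  ((Finset.Icc 1 (m - 1)).filter fun i => w (i + 1) < w i).card

/-- The number of ascents of a word of length `m`. -/
def ascW (m : ℕ) (w : ℕ → ℕ) : ℕ :=
  ((Finset.Icc 1 (m - 1)).filter fun i => w i < w (i + 1)).card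

/-- The number of non-descents of a word of length `m`. -/
def ndesW (m : ℕ) (w : ℕ → ℕ) : ℕ :=
  ((Finset.Icc 1 m).filter fun i => i = m ∨ w i < w (i + 1)).card

/-- The number of non-ascents of a word of length `m`. -/
def nascW (m : ℕ) (w : ℕ → ℕ) : ℕ :=
  ((Finset.Icc 1 m).filter fun i => i = m ∨ ¬ w i < w (i + 1)).card

/-- `π_e = π₂π₄⋯`, the subword of even-position entries, as a 1-based word. -/
def evenWord {N : ℕ} (π : Equiv.Perm (Fin N)) (j : ℕ) : ℕ := word π (2 * j)

/-- `π_o = π₁π₃⋯`, the subword of odd-position entries, as a 1-based word. -/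
def oddWord {N : ℕ} (π : Equiv.Perm (Fin N)) (j : ℕ) : ℕ := word π (2 * j - 1)

/-- A word of length `N` is alternating: `w₁ < w₂ > w₃ < w₄ > ⋯`. -/
def IsAltW (N : ℕ) (w : ℕ → ℕ) : Prop :=
  ∀ i ∈ Finset.Icc 1 (N - 1), (i % 2 = 1 → w i < w (i + 1)) ∧ (i % 2 = 0 → w (i + 1) < w i)

/-- A word of length `N` is reverse alternating: `w₁ > w₂ < w₃ > w₄ < ⋯`. -/
def IsRaltW (N : ℕ) (w : ℕ → ℕ) : Prop :=
  ∀ i ∈ Finset.Icc 1 (N - 1), (i % 2 = 1 → w (i + 1) < w i) ∧ (i % 2 = 0 → w i < w (i + 1))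

/-- `Alt_N`, the set of alternating permutations of `{1, …, N}`. -/
def altPerms (N : ℕ) : Finset (Equiv.Perm (Fin N)) :=
  Finset.univ.filter fun π => IsAltW N (word π)

/-- `Ralt_N`, the set of reverse alternating permutations of `{1, …, N}`. -/
def raltPerms (N : ℕ) : Finset (Equiv.Perm (Fin N)) :=
  Finset.univ.filter fun π => IsRaltW N (word π)

/-- `κ_N = (1)(2,3)(4,5)⋯`, acting on the 1-based values `{1, …, N}`. -/
def kappaNat (N j : ℕ) : ℕ :=
  if j % 2 = 0 ∧ 2 ≤ j ∧ j + 1 ≤ N then j + 1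
  else if j % 2 = 1 ∧ 3 ≤ j ∧ j ≤ N then j - 1
  else j

/-- `η_N = (1,2)(3,4)⋯`, acting on the 1-based values `{1, …, N}`. -/
def etaNat (N j : ℕ) : ℕ :=
  if j % 2 = 1 ∧ j + 1 ≤ N then j + 1
  else if j % 2 = 0 ∧ 2 ≤ j ∧ j ≤ N then j - 1
  else j

/-- `maj(π⁻¹)`. -/
def majInv (N : ℕ) (π : Equiv.Perm (Fin N)) : ℕ := majW N (word π.symm)

/-- `maj(κ_N π⁻¹)`. -/
def majKappaInv (N : ℕ) (π : Equiv.Perm (Fin N)) : ℕ :=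
  majW N fun i => kappaNat N (word π.symm i)

/-- `maj(η_N π⁻¹)`. -/
def majEtaInv (N : ℕ) (π : Equiv.Perm (Fin N)) : ℕ :=
  majW N fun i => etaNat N (word π.symm i)

/-- The reversal permutation `i ↦ N + 1 - i` of `Fin N`. -/
def revPerm (N : ℕ) : Equiv.Perm (Fin N) :=
  ⟨Fin.rev, Fin.rev, fun i => Fin.rev_rev i, fun i => Fin.rev_rev i⟩

/-- `φ(π)ᵢ = (N+1) - π_{N+1-i}`. -/
def phiMap {N : ℕ} (π : Equiv.Perm (Fin N)) : Equiv.Perm (Fin N) :=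
  ((revPerm N).trans π).trans (revPerm N)

/-! ### Lattice paths.

A path with `L` unit steps is encoded by `s : Fin L → Bool` (`true` = up-step `(1,1)`,
`false` = down-step `(1,-1)`). -/

/-- The vertical displacement of the `j`-th step. -/
def stepVal {L : ℕ} (s : Fin L → Bool) (j : ℕ) : ℤ :=
  if h : j < L then (if s ⟨j, h⟩ then 1 else -1) else 0

/-- The height of the path after `i` steps. -/
def pht {L : ℕ} (s : Fin L → Bool) (i : ℕ) : ℤ := ∑ j ∈ Finset.range i, stepVal s j

/-- A Dyck path: stays (weakly) above the `x`-axis and ends at height `0`. -/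
def IsDyck {L : ℕ} (s : Fin L → Bool) : Prop :=
  (∀ i ∈ Finset.range (L + 1), 0 ≤ pht s i) ∧ pht s L = 0

/-- The Dyck paths with `L` steps. -/
def dyckPaths (L : ℕ) : Finset (Fin L → Bool) := Finset.univ.filter fun s => IsDyck s

/-- The (indices of the) valleys of a path: a down-step followed by an up-step. -/
def valleys {L : ℕ} (s : Fin L → Bool) : Finset ℕ :=
  (Finset.Icc 1 (L - 1)).filter fun i => stepVal s (i - 1) = -1 ∧ stepVal s i = 1

/-- The (indices of the) peaks of a path: an up-step followed by a down-step. -/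
def peaks {L : ℕ} (s : Fin L → Bool) : Finset ℕ :=
  (Finset.Icc 1 (L - 1)).filter fun i => stepVal s (i - 1) = 1 ∧ stepVal s i = -1

/-- The (indices of the) high peaks of a path: peaks of height at least `2`. -/
def highPeaks {L : ℕ} (s : Fin L → Bool) : Finset ℕ :=
  (peaks s).filter fun i => 2 ≤ pht s i

/-- The height over abscissa `x` of a path starting at `(-m, 0)`. -/
def aht (m : ℕ) {L : ℕ} (s : Fin L → Bool) (x : ℤ) : ℤ := pht s (x + m).toNat

/-- `D₁ < D₂`, for `D₁` starting at `(-m₁,0)` and `D₂` at `(-m₂,0)`, `m₁ ≤ m₂`: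
strictly below on the common range of abscissas. -/
def PathLT (m₁ m₂ : ℕ) {L₁ L₂ : ℕ} (s₁ : Fin L₁ → Bool) (s₂ : Fin L₂ → Bool) : Prop :=
  ∀ x ∈ Finset.Icc (-(m₁ : ℤ)) (m₁ : ℤ), aht m₁ s₁ x < aht m₂ s₂ x

/-- `D₁ ≤ D₂`: weakly below, sharing no step. -/
def PathLE (m₁ m₂ : ℕ) {L₁ L₂ : ℕ} (s₁ : Fin L₁ → Bool) (s₂ : Fin L₂ → Bool) : Prop :=
  (∀ x ∈ Finset.Icc (-(m₁ : ℤ)) (m₁ : ℤ), aht m₁ s₁ x ≤ aht m₂ s₂ x) ∧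
    ∀ x ∈ Finset.Icc (-(m₁ : ℤ)) ((m₁ : ℤ) - 1),
      ¬(aht m₁ s₁ x = aht m₂ s₂ x ∧ aht m₁ s₁ (x + 1) = aht m₂ s₂ (x + 1))

/-- The abscissas of the common lattice points of two paths. -/
def interPts (m₁ m₂ : ℕ) {L₁ L₂ : ℕ} (s₁ : Fin L₁ → Bool) (s₂ : Fin L₂ → Bool) : Finset ℤ :=
  (Finset.Icc (-(m₁ : ℤ)) (m₁ : ℤ)).filter fun x => aht m₁ s₁ x = aht m₂ s₂ x

/-- `Dyck^k_{2n}`: tuples `(D₁, …, D_k)` with `D_i ∈ Dyck((-n-2i+2,0) → (n+2i-2,0))`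
(0-based: `D_i` has half-length `n + 2i`). -/
abbrev DyckTuple (n k : ℕ) := ∀ i : Fin k, Fin (2 * (n + 2 * (i : ℕ))) → Bool

/-- The tuples `(D₁ ≤ D₂ ≤ ⋯ ≤ D_k) ∈ Dyck^k_{2n}`. -/
def weakTuples (n k : ℕ) : Finset (DyckTuple n k) :=
  Finset.univ.filter fun D =>
    (∀ i : Fin k, IsDyck (D i)) ∧
      ∀ (i : ℕ) (h : i + 1 < k),
        PathLE (n + 2 * i) (n + 2 * (i + 1)) (D ⟨i, by omega⟩) (D ⟨i + 1, h⟩)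

/-- The tuples `(D₁ < D₂ < ⋯ < D_k) ∈ Dyck^k_{2n}`. -/
def strictTuples (n k : ℕ) : Finset (DyckTuple n k) :=
  Finset.univ.filter fun D =>
    (∀ i : Fin k, IsDyck (D i)) ∧
      ∀ (i : ℕ) (h : i + 1 < k),
        PathLT (n + 2 * i) (n + 2 * (i + 1)) (D ⟨i, by omega⟩) (D ⟨i + 1, h⟩)

/-- The lattice points of a path starting at `(-m, 0)`, as a finite subset of `ℤ × ℤ`. -/
def pathPoints (m : ℕ) {L : ℕ} (s : Fin L → Bool) : Finset (ℤ × ℤ) :=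
  (Finset.range (L + 1)).image fun t : ℕ => (-(m : ℤ) + (t : ℤ), pht s t)

/-- The non-valley lattice points of a path starting at `(-m, 0)`. -/
def nonValleyPoints (m : ℕ) {L : ℕ} (s : Fin L → Bool) : Finset (ℤ × ℤ) :=
  ((Finset.range (L + 1)).filter fun t => t ∉ valleys s).image
    fun t : ℕ => (-(m : ℤ) + (t : ℤ), pht s t)

section Weights

variable {F : Type*} [Field F]

/-- The `i`-th lattice point (in `ℤ × ℕ`) of a path starting at `(a, 0)`. -/
def ptOf (a : ℤ) {L : ℕ} (s : Fin L → Bool) (i : ℕ) : ℤ × ℕ := (a + i, (pht s i).toNat)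

/-- `wt_V(D) = ∏_{p ∈ D} wt(p) · ∏_{p ∈ V(D)} w̃t(p)` for a path starting at `(a, 0)`. -/
def wtVal (wt wte : ℤ × ℕ → F) (a : ℤ) {L : ℕ} (s : Fin L → Bool) : F :=
  (∏ i ∈ Finset.range (L + 1), wt (ptOf a s i)) * ∏ i ∈ valleys s, wte (ptOf a s i)

/-- `wt_HP(D) = ∏_{p ∈ D} wt(p) · ∏_{p ∈ HP(D)} w̃t(p)` for a path starting at `(a, 0)`. -/
def wtHigh (wt wte : ℤ × ℕ → F) (a : ℤ) {L : ℕ} (s : Fin L → Bool) : F :=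
  (∏ i ∈ Finset.range (L + 1), wt (ptOf a s i)) * ∏ i ∈ highPeaks s, wte (ptOf a s i)

/-- `∏_{p ∈ D₁ ∩ D₂} f(p)`, for `D₁` starting at `(-m₁,0)` and `D₂` at `(-m₂,0)`. -/
def interProd (f : ℤ × ℕ → F) (m₁ m₂ : ℕ) {L₁ L₂ : ℕ}
    (s₁ : Fin L₁ → Bool) (s₂ : Fin L₂ → Bool) : F :=
  ∏ x ∈ interPts m₁ m₂ s₁ s₂, f (x, (aht m₁ s₁ x).toNat)

/-- The sum over `(D₁ ≤ ⋯ ≤ D_k) ∈ Dyck^k_{2n}` of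
`wt_V(D₁)⋯wt_V(D_k) ∏_{i=1}^{k-1} ∏_{p ∈ D_i ∩ D_{i+1}} (1 - w̃t(p)⁻¹)`. -/
def weakSum (wt wte : ℤ × ℕ → F) (n k : ℕ) : F :=
  ∑ D ∈ weakTuples n k,
    (∏ i : Fin k, wtVal wt wte (-(n : ℤ) - 2 * (i : ℕ)) (D i)) *
      ∏ j : Fin (k - 1),
        interProd (fun p => 1 - (wte p)⁻¹) (n + 2 * (j : ℕ)) (n + 2 * ((j : ℕ) + 1))
          (D ⟨(j : ℕ), by have := j.isLt; omega⟩)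
          (D ⟨(j : ℕ) + 1, by have := j.isLt; omega⟩)

/-- The sum over `(D₁ < ⋯ < D_k) ∈ Dyck^k_{2n}` of `wt_V(D₁)⋯wt_V(D_k)`. -/
def strictSum (wt wte : ℤ × ℕ → F) (n k : ℕ) : F :=
  ∑ D ∈ strictTuples n k, ∏ i : Fin k, wtVal wt wte (-(n : ℤ) - 2 * (i : ℕ)) (D i)

end Weights

/-! ### Schröder paths.

A path with `L` steps is encoded by `st : Fin L → Fin 3`
(`0` = up-step `(1,1)`, `1` = down-step `(1,-1)`, `2` = horizontal step `(2,0)`). -/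

/-- The horizontal displacement of the `j`-th step. -/
def stepX {L : ℕ} (st : Fin L → Fin 3) (j : ℕ) : ℕ :=
  if h : j < L then (if st ⟨j, h⟩ = 2 then 2 else 1) else 0

/-- The vertical displacement of the `j`-th step. -/
def stepY {L : ℕ} (st : Fin L → Fin 3) (j : ℕ) : ℤ :=
  if h : j < L then (if st ⟨j, h⟩ = 0 then 1 else if st ⟨j, h⟩ = 1 then -1 else 0) else 0

/-- The horizontal position (relative to the start) after `j` steps. -/
def xpos {L : ℕ} (st : Fin L → Fin 3) (j : ℕ) : ℕ := ∑ t ∈ Finset.range j, stepX st t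

/-- The height after `j` steps. -/
def ypos {L : ℕ} (st : Fin L → Fin 3) (j : ℕ) : ℤ := ∑ t ∈ Finset.range j, stepY st t

/-- A (little) Schröder path of horizontal span `2m`: nonnegative heights, ends at
height `0`, and no horizontal step on the `x`-axis. -/
def IsSch (m : ℕ) {L : ℕ} (st : Fin L → Fin 3) : Prop :=
  xpos st L = 2 * m ∧ (∀ j ∈ Finset.range (L + 1), 0 ≤ ypos st j) ∧ ypos st L = 0 ∧
    ∀ j ∈ Finset.range L, stepX st j = 2 → ypos st j ≠ 0

/-- The height of a Schröder path over the relative abscissa `x` (midpoints of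
horizontal steps get the height of that horizontal step). -/
def schHeight {L : ℕ} (st : Fin L → Fin 3) (x : ℕ) : ℤ :=
  ∑ t ∈ Finset.range L, if xpos st (t + 1) ≤ x then stepY st t else 0

/-- The relative abscissa `x` is the midpoint of a horizontal step. -/
def IsHMid {L : ℕ} (st : Fin L → Fin 3) (x : ℕ) : Prop :=
  ∃ j ∈ Finset.range L, stepX st j = 2 ∧ xpos st j + 1 = x

/-- The number of horizontal steps of a Schröder path. -/
def hsCount {L : ℕ} (st : Fin L → Fin 3) : ℕ :=
  ((Finset.range L).filter fun j => stepX st j = 2).card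

/-- `wt_Sch(c, S) = c^{hs(S)} ∏_{p ∈ S} wt(p)` for a Schröder path starting at `(a,0)`. -/
def wtSch {F : Type*} [Field F] (wt : ℤ × ℕ → F) (c : F) (a : ℤ) {L : ℕ}
    (st : Fin L → Fin 3) : F :=
  c ^ hsCount st * ∏ j ∈ Finset.range (L + 1), wt (a + xpos st j, (ypos st j).toNat)

/-- `φ_V(S) = D`: the Dyck path `D` (with `L'` steps) is obtained from the Schröder
path `S` by replacing each horizontal step by a down-step followed by an up-step. -/
def PhiVEq {L L' : ℕ} (st : Fin L → Fin 3) (s : Fin L' → Bool) : Prop :=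
  ∀ x ∈ Finset.range (L' + 1),
    pht s x = schHeight st x - (if IsHMid st x then 1 else 0)

/-- `φ_HP(S) = D`: the Dyck path `D` is obtained from the Schröder path `S` by
replacing each horizontal step by an up-step followed by a down-step. -/
def PhiHPEq {L L' : ℕ} (st : Fin L → Fin 3) (s : Fin L' → Bool) : Prop :=
  ∀ x ∈ Finset.range (L' + 1),
    pht s x = schHeight st x + (if IsHMid st x then 1 else 0)

/-! ### Young diagrams, excited and pleasant diagrams, reverse plane partitions. -/

/-- The cells (1-based, matrix coordinates) of the staircase `δ_m = (m-1, m-2, …, 1)`. -/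
def deltaCells (m : ℕ) : Finset (ℕ × ℕ) :=
  ((Finset.Icc 1 m) ×ˢ (Finset.Icc 1 m)).filter fun c => c.1 + c.2 ≤ m

/-- An excited move inside the Young diagram `lam`. -/
def ExcitedStep (lam : Finset (ℕ × ℕ)) (D D' : Finset (ℕ × ℕ)) : Prop :=
  ∃ i j : ℕ, (i, j) ∈ D ∧ (i + 1, j) ∉ D ∧ (i, j + 1) ∉ D ∧ (i + 1, j + 1) ∉ D ∧
    (i + 1, j + 1) ∈ lam ∧ D' = insert (i + 1, j + 1) (D.erase (i, j))

/-- `D` is an excited diagram of `lam/mu`. -/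
def IsExcited (lam mu D : Finset (ℕ × ℕ)) : Prop :=
  Relation.ReflTransGen (ExcitedStep lam) mu D

/-- `P` is a pleasant diagram of `lam/mu`: a subset of `lam \ D` for an excited diagram `D`. -/
def IsPleasant (lam mu : Finset (ℕ × ℕ)) (P : Finset (ℕ × ℕ)) : Prop :=
  ∃ D, IsExcited lam mu D ∧ P ⊆ lam \ D

/-- `p(lam/mu)`, the number of pleasant diagrams of `lam/mu`. -/
def pleasantCount (lam mu : Finset (ℕ × ℕ)) : ℕ :=
  Set.ncard {P : Finset (ℕ × ℕ) | IsPleasant lam mu P}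

/-- A reverse plane partition on the skew shape `shape`: a filling by nonnegative
integers (vanishing off the shape) weakly increasing along rows and columns. -/
def IsRPP (shape : Finset (ℕ × ℕ)) (f : ℕ × ℕ → ℕ) : Prop :=
  (∀ c, c ∉ shape → f c = 0) ∧
    (∀ i j : ℕ, (i, j) ∈ shape → (i, j + 1) ∈ shape → f (i, j) ≤ f (i, j + 1)) ∧
    ∀ i j : ℕ, (i, j) ∈ shape → (i + 1, j) ∈ shape → f (i, j) ≤ f (i + 1, j)

/-- `∑_{π ∈ RPP(shape)} q^{|π|}` as a formal power series in `q`. -/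
def rppGF (shape : Finset (ℕ × ℕ)) : PowerSeries ℚ :=
  PowerSeries.mk fun N =>
    (Set.ncard {f : ℕ × ℕ → ℕ | IsRPP shape f ∧ ∑ c ∈ shape, f c = N} : ℚ)

/-- `(q; q)_m = ∏_{i=1}^m (1 - q^i)` as a formal power series. -/
def pochPS (m : ℕ) : PowerSeries ℚ :=
  ∏ i ∈ Finset.Icc 1 m, (1 - (PowerSeries.X : PowerSeries ℚ) ^ i)

/-- `E*_N(q) = ∑_{π ∈ Alt_N} q^{maj(κ_N π⁻¹)}` as a formal power series. -/
def EstarPS (N : ℕ) : PowerSeries ℚ :=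
  ∑ π ∈ altPerms N, (PowerSeries.X : PowerSeries ℚ) ^ majKappaInv N π

/-- `E*_m(q)/(q;q)_m` for `m ≥ 0`, and `0` for `m < 0`. -/
def EstarEntry (m : ℤ) : PowerSeries ℚ :=
  if m < 0 then 0 else EstarPS m.toNat * (pochPS m.toNat)⁻¹

/-- The Gaussian binomial coefficient `[N choose M]_q` as a formal power series. -/
def gaussPS (N M : ℕ) : PowerSeries ℚ :=
  pochPS N * (pochPS M * pochPS (N - M))⁻¹

section NonIntersecting

variable {S A R : Type*}

/-- The state reached from `a` after reading the first `t` letters of `w`. -/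
def run (next : S → A → S) (a : S) {T : ℕ} (w : Fin T → A) : ℕ → S
  | 0 => a
  | t + 1 => if h : t < T then next (run next a w t) (w ⟨t, h⟩) else run next a w t

theorem run_cons (next : S → A → S) (a : S) {T : ℕ} (s : A) (w : Fin T → A) (t : ℕ) :
    run next a (Fin.cons s w : Fin (T + 1) → A) (t + 1) = run next (next a s) w t := by
  induction t with
  | zero => simp [run]
  | succ t ih =>
    rw [run, ih, run]
    by_cases h : t < T
    · have h1 : t + 1 < T + 1 := by omega
      rw [dif_pos h1, dif_pos h]
      rfl
    · have h1 : ¬ t + 1 < T + 1 := by omega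
      rw [dif_neg h1, dif_neg h]

/-- The weight of the run of `w` from `a`, started at time `x`. -/
def runWt [CommRing R] (next : S → A → S) (τ : ℕ → S → A → R) (x : ℕ) (a : S) {T : ℕ}
    (w : Fin T → A) : R :=
  ∏ t : Fin T, τ (x + t) (run next a w t) (w t)

theorem runWt_cons [CommRing R] (next : S → A → S) (τ : ℕ → S → A → R) (x : ℕ) (a : S) {T : ℕ}
    (s : A) (w : Fin T → A) :
    runWt next τ x a (Fin.cons s w : Fin (T + 1) → A) =
      τ x a s * runWt next τ (x + 1) (next a s) w := by
  rw [runWt, Fin.prod_univ_succ, runWt]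
  refine congrArg _ ?_
  refine Finset.prod_congr rfl fun t _ => ?_
  rw [Fin.cons_succ, Fin.val_succ, run_cons]
  congr 1
  omega

theorem sum_cons {M : Type*} [AddCommMonoid M] [Fintype A] {T : ℕ} (f : (Fin (T + 1) → A) → M) :
    ∑ w, f w = ∑ s : A, ∑ w : Fin T → A, f (Fin.cons s w : Fin (T + 1) → A) := by
  rw [← Fintype.sum_prod_type']
  exact (Equiv.sum_comp (Fin.consEquiv fun _ => A) f).symm

theorem sum_pi_cons {M : Type*} [AddCommMonoid M] [Fintype A] {k T : ℕ}
    (f : (Fin k → Fin (T + 1) → A) → M) :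
    ∑ w, f w = ∑ s : Fin k → A, ∑ w : Fin k → Fin T → A,
      f fun i => (Fin.cons (s i) (w i) : Fin (T + 1) → A) := by
  rw [← Fintype.sum_prod_type']
  exact (Equiv.sum_comp ((Equiv.arrowProdEquivProdArrow (Fin k) (fun _ => A)
    (fun _ => Fin T → A)).symm.trans
      (Equiv.piCongrRight fun _ => Fin.consEquiv fun _ => A)) f).symm

theorem det_indicator_eq [CommRing R] [DecidableEq S] {k : ℕ} (r : S → S → Prop) (key : S → ℤ)
    (hkey : ∀ a b, r a b → key a < key b) (a b : Fin k → S)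
    (ha : ∀ i j, i < j → r (a i) (a j)) (hb : ∀ i j, i < j → r (b i) (b j)) :
    (Matrix.of fun i j : Fin k => if a i = b j then (1 : R) else 0).det =
      if ∀ i, a i = b i then 1 else 0 := by
  have hka : StrictMono fun i => key (a i) := fun i j h => hkey _ _ (ha i j h)
  have hkb : StrictMono fun i => key (b i) := fun i j h => hkey _ _ (hb i j h)
  split_ifs with h
  · obtain rfl : a = b := funext h
    have : (Matrix.of fun i j : Fin k => if a i = a j then (1 : R) else 0) = 1 := by
      ext i j
      have hinj : a i = a j ↔ i = j :=
        ⟨fun e => hka.injective (by simp [e]), fun e => by rw [e]⟩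
      simp [Matrix.one_apply, hinj]
    rw [this, Matrix.det_one]
  · rw [Matrix.det_apply]
    refine Finset.sum_eq_zero fun σ _ => ?_
    by_cases hσ : ∀ i, a (σ i) = b i
    · exfalso
      have hmono : StrictMono σ := by
        intro i j hij
        have h1 : key (a (σ i)) < key (a (σ j)) := by
          rw [hσ, hσ]
          exact hkb hij
        exact hka.lt_iff_lt.1 h1
      have h2 : ∀ i, σ i = i := fun i => by
        have := Subsingleton.elim (hmono.orderIsoOfSurjective σ σ.surjective) (OrderIso.refl _)
        exact DFunLike.congr_fun this i
      exact h fun i => by rw [← hσ i, h2]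
    · push Not at hσ
      obtain ⟨i, hi⟩ := hσ
      rw [Finset.prod_eq_zero (Finset.mem_univ i) (by simp [hi]), smul_zero]

theorem det_sum_smul [CommRing R] [Fintype A] {k : ℕ} (c : Fin k → A → R)
    (v : Fin k → A → Fin k → R) :
    (Matrix.of fun i j => ∑ s, c i s * v i s j).det =
      ∑ s : Fin k → A, (∏ i, c i (s i)) * (Matrix.of fun i j => v i (s i) j).det := by
  have h := (Matrix.detRowAlternating (R := R) (n := Fin k)).toMultilinearMap.map_sum
    fun i s => c i s • v i s
  have he : (Matrix.of fun i j => ∑ s, c i s * v i s j) = fun i => ∑ s, c i s • v i s := by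
    funext i j
    simp [Finset.sum_apply]
  rw [he]
  refine h.trans (Finset.sum_congr rfl fun s _ => ?_)
  exact MultilinearMap.map_smul_univ _ (fun i => c i (s i)) fun i => v i (s i)

/-- The Lindström–Gessel–Viennot lemma for runs of an automaton: if runs cannot cross without
meeting, the determinant of the path matrix enumerates the families of ordered runs. -/
theorem det_runWt [CommRing R] [Fintype A] [DecidableEq S] (next : S → A → S) (τ : ℕ → S → A → R)
    (r : S → S → Prop) (key : S → ℤ) (hkey : ∀ a b, r a b → key a < key b)
    (hplanar : ∀ x a a' s s', r a a' → τ x a s ≠ 0 → τ x a' s' ≠ 0 →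
      next a s = next a' s' ∨ r (next a s) (next a' s'))
    {k : ℕ} (b : Fin k → S) (hb : ∀ i j, i < j → r (b i) (b j)) (T : ℕ) :
    ∀ (x : ℕ) (a : Fin k → S), (∀ i j, i < j → r (a i) (a j)) →
    (Matrix.of fun i j : Fin k => ∑ w : Fin T → A,
        if run next (a i) w T = b j then runWt next τ x (a i) w else 0).det =
      ∑ w : Fin k → Fin T → A,
        if (∀ i, run next (a i) (w i) T = b i) ∧
            ∀ t ≤ T, ∀ i j, i < j → r (run next (a i) (w i) t) (run next (a j) (w j) t)
        then ∏ i, runWt next τ x (a i) (w i) else 0 := by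
  induction T with
  | zero =>
    intro x a ha
    have h := det_indicator_eq (R := R) r key hkey a b ha hb
    have ha' : (∀ i, a i = b i) ∧ (∀ i j, i < j → r (a i) (a j)) ↔ ∀ i, a i = b i :=
      and_iff_left ha
    simpa [run, runWt, ha'] using h
  | succ T ih =>
    intro x a ha
    have hrow : (Matrix.of fun i j : Fin k => ∑ w : Fin (T + 1) → A,
        if run next (a i) w (T + 1) = b j then runWt next τ x (a i) w else 0) =
        Matrix.of fun i j => ∑ s : A, τ x (a i) s * ∑ w : Fin T → A,
          if run next (next (a i) s) w T = b j then
            runWt next τ (x + 1) (next (a i) s) w else 0 := by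
      ext i j
      rw [Matrix.of_apply, Matrix.of_apply, sum_cons]
      refine Finset.sum_congr rfl fun s _ => ?_
      simp only [run_cons, runWt_cons, Finset.mul_sum, mul_ite,
        mul_zero]
    rw [hrow, det_sum_smul (fun i s => τ x (a i) s) fun i s j => ∑ w : Fin T → A,
      if run next (next (a i) s) w T = b j then runWt next τ (x + 1) (next (a i) s) w else 0,
      sum_pi_cons]
    refine Finset.sum_congr rfl fun s _ => ?_
    simp only [run_cons, runWt_cons, Finset.prod_mul_distrib]
    by_cases h0 : ∏ i, τ x (a i) (s i) = 0
    · simp [h0]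
    have hne : ∀ i, τ x (a i) (s i) ≠ 0 := fun i hi =>
      h0 (Finset.prod_eq_zero (Finset.mem_univ i) hi)
    by_cases hord : ∀ i j, i < j → r (next (a i) (s i)) (next (a j) (s j))
    · rw [ih (x + 1) (fun i => next (a i) (s i)) hord]
      rw [Finset.mul_sum]
      refine Finset.sum_congr rfl fun w _ => ?_
      rw [mul_ite, mul_zero]
      refine if_congr (and_congr Iff.rfl ⟨fun h t ht => ?_, fun h t ht i j hij => ?_⟩) rfl rfl
      · cases t with
        | zero => exact ha
        | succ t =>
          intro i j hij
          rw [run_cons, run_cons]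
          exact h t (by omega) i j hij
      · have := h (t + 1) (by omega) i j hij
        rwa [run_cons, run_cons] at this
    · have hz : ∀ w : Fin k → Fin T → A, ¬ ∀ t ≤ T + 1, ∀ i j, i < j →
          r (run next (a i) (Fin.cons (s i) (w i) : Fin (T + 1) → A) t)
            (run next (a j) (Fin.cons (s j) (w j) : Fin (T + 1) → A) t) := by
        intro w h
        refine hord fun i j hij => ?_
        have := h 1 (by omega) i j hij
        rwa [run_cons, run_cons] at this
      push Not at hord
      obtain ⟨i, j, hij, hr⟩ := hord
      have he := (hplanar x _ _ _ _ (ha i j hij) (hne i) (hne j)).resolve_right hr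
      rw [Finset.sum_eq_zero fun w _ => if_neg fun h => hz w h.2]
      rw [Matrix.det_zero_of_row_eq hij.ne (funext fun l => by simp only [Matrix.of_apply, he]), mul_zero]

end NonIntersecting

section MarkedWords

variable {F : Type*} [Field F]

theorem stepVal_eq_ite {T : ℕ} (u : Fin T → Bool) {t : ℕ} (h : t < T) :
    stepVal u t = if u ⟨t, h⟩ then 1 else -1 := by
  rw [stepVal, dif_pos h]

theorem stepVal_eq_or {T : ℕ} (u : Fin T → Bool) {t : ℕ} (h : t < T) :
    stepVal u t = 1 ∨ stepVal u t = -1 := by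
  rw [stepVal_eq_ite u h]
  split_ifs <;> simp

theorem stepVal_eq_zero {T : ℕ} (u : Fin T → Bool) {t : ℕ} (h : T ≤ t) : stepVal u t = 0 := by
  rw [stepVal, dif_neg (by omega)]

theorem pht_zero {T : ℕ} (u : Fin T → Bool) : pht u 0 = 0 := by
  simp [pht]

theorem pht_succ {T : ℕ} (u : Fin T → Bool) (t : ℕ) :
    pht u (t + 1) = pht u t + stepVal u t := by
  rw [pht, pht, Finset.sum_range_succ]

theorem pht_emod_two {T : ℕ} (u : Fin T → Bool) {t : ℕ} (h : t ≤ T) :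
    pht u t % 2 = (t : ℤ) % 2 := by
  induction t with
  | zero => simp [pht_zero]
  | succ t ih =>
    have := ih (by omega)
    rw [pht_succ]
    rcases stepVal_eq_or u (show t < T by omega) with e | e <;> rw [e] <;> omega

/-- The step `t` of `u`, started at height `a`, is the descent into a valley, and starts at
positive height. -/
def IsValleyStep (a : ℤ) {T : ℕ} (u : Fin T → Bool) (t : ℕ) : Prop :=
  stepVal u t = -1 ∧ stepVal u (t + 1) = 1 ∧ 1 ≤ a + pht u t

/-- The path starting at `(-N, a)` stays weakly above the `x`-axis, except for an initial run of
up-steps and a final run of down-steps. -/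
def IsBounded (N : ℕ) (a : ℤ) {T : ℕ} (u : Fin T → Bool) : Prop :=
  ∀ t < T, (stepVal u t = 1 → 0 ≤ a + pht u t ∨ t < N) ∧
    (stepVal u t = -1 → 1 ≤ a + pht u t ∨ N ≤ t)

/-- The weight of the point reached at time `t` by a path starting at abscissa `-N`. -/
def pointWt (f : ℤ × ℕ → F) (N t : ℕ) (y : ℤ) : F :=
  if 0 ≤ y then f ((t : ℤ) - N, y.toNat) else 1

/-- A state is a height together with a mark; a letter is a step together with the mark of the
point it reaches. -/
def markStep (a : ℤ × Bool) (l : Bool × Bool) : ℤ × Bool :=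
  (a.1 + if l.1 then 1 else -1, l.2)

/-- The transition weights for paths with marked valleys. -/
def markWt (wt wte : ℤ × ℕ → F) (N t : ℕ) (a : ℤ × Bool) (l : Bool × Bool) : F :=
  if (a.2 = true → l.1 = true) ∧ (l.2 = true → l.1 = false ∧ 1 ≤ a.1) ∧
      (l.1 = true → 0 ≤ a.1 ∨ t < N) ∧ (l.1 = false → 1 ≤ a.1 ∨ N ≤ t) then
    pointWt wt N t a.1 *
      if l.2 then wte (((t + 1 : ℕ) : ℤ) - N, (a.1 - 1).toNat) - 1 else 1
  else 0

/-- The order of states of equal parity: marked points lie slightly higher. -/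
def markLT (a b : ℤ × Bool) : Prop :=
  (b.1 - a.1) % 2 = 0 ∧ (a.1 < b.1 ∨ a.1 = b.1 ∧ a.2 = false ∧ b.2 = true)

theorem markLT_trans {a b c : ℤ × Bool} (hab : markLT a b) (hbc : markLT b c) : markLT a c := by
  obtain ⟨h1, h2⟩ := hab
  obtain ⟨h3, h4⟩ := hbc
  refine ⟨by omega, ?_⟩
  rcases h2 with h2 | ⟨h2, h5, h6⟩ <;> rcases h4 with h4 | ⟨h4, h7, h8⟩
  · left; omega
  · left; omega
  · left; omega
  · rw [h6] at h7
    cases h7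

theorem markLT_key (a b : ℤ × Bool) (h : markLT a b) :
    2 * a.1 + (if a.2 then 1 else 0) < 2 * b.1 + if b.2 then 1 else 0 := by
  obtain ⟨h1, h2 | ⟨h2, h3, h4⟩⟩ := h
  · split_ifs <;> omega
  · rw [h3, h4, h2]
    simp

theorem markWt_planar (wt wte : ℤ × ℕ → F) (N t : ℕ) (a a' : ℤ × Bool) (l l' : Bool × Bool)
    (h : markLT a a') (hl : markWt wt wte N t a l ≠ 0) (hl' : markWt wt wte N t a' l' ≠ 0) :
    markStep a l = markStep a' l' ∨ markLT (markStep a l) (markStep a' l') := by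
  rw [markWt] at hl hl'
  have c := (ite_ne_right_iff.1 hl).1
  have c' := (ite_ne_right_iff.1 hl').1
  obtain ⟨y, m⟩ := a
  obtain ⟨y', m'⟩ := a'
  obtain ⟨u, μ⟩ := l
  obtain ⟨u', μ'⟩ := l'
  obtain ⟨h1, h2⟩ := h
  obtain ⟨c1, c2, -⟩ := c
  obtain ⟨c1', c2', -⟩ := c'
  simp only [markStep, markLT, Prod.mk.injEq] at *
  clear hl hl'
  cases m <;> cases m' <;> cases u <;> cases u' <;> cases μ <;> cases μ' <;> simp at * <;> omega

/-- The mark of the point reached at time `t`. -/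
def markAt {T : ℕ} (m : Fin T → Bool) : ℕ → Bool
  | 0 => false
  | t + 1 => if h : t < T then m ⟨t, h⟩ else false

theorem run_markStep (a : ℤ) {T : ℕ} (u m : Fin T → Bool) {t : ℕ} (h : t ≤ T) :
    run markStep (a, false) (fun j => (u j, m j)) t = (a + pht u t, markAt m t) := by
  induction t with
  | zero => simp [run, pht_zero, markAt]
  | succ t ih =>
    have ht : t < T := by omega
    rw [run, dif_pos ht, ih (by omega), pht_succ, stepVal_eq_ite u ht, markAt, dif_pos ht,
      markStep]
    simp only [add_assoc]

theorem runWt_markStep (wt wte : ℤ × ℕ → F) (N : ℕ) (a b : ℤ) {T : ℕ} (u m : Fin T → Bool) :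
    (if run markStep (a, false) (fun j => (u j, m j)) T = (b, false) then
      runWt markStep (markWt wt wte N) 0 (a, false) (fun j => (u j, m j)) else 0) =
    if (IsBounded N a u ∧ a + pht u T = b) ∧ ∀ t : Fin T, m t = true → IsValleyStep a u t then
      (∏ t : Fin T, pointWt wt N t (a + pht u t)) *
        ∏ t : Fin T, if m t then
          wte (((t + 1 : ℕ) : ℤ) - N, (a + pht u (t + 1)).toNat) - 1 else 1
    else 0 := by
  have hw : runWt markStep (markWt wt wte N) 0 (a, false) (fun j => (u j, m j)) =
      if ∀ t : Fin T, (markAt m t = true → u t = true) ∧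
          (m t = true → u t = false ∧ 1 ≤ a + pht u t) ∧
          (u t = true → 0 ≤ a + pht u t ∨ (t : ℕ) < N) ∧
          (u t = false → 1 ≤ a + pht u t ∨ N ≤ (t : ℕ)) then
        (∏ t : Fin T, pointWt wt N t (a + pht u t)) *
        ∏ t : Fin T, (if m t then
          wte (((t + 1 : ℕ) : ℤ) - N, (a + pht u t - 1).toNat) - 1 else 1)
      else 0 := by
    rw [runWt, ← Finset.prod_mul_distrib]
    simp only [zero_add]
    have := fun t : Fin T => run_markStep a u m t.2.le
    simp only [this, markWt]
    rw [Finset.prod_ite_zero]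
    simp only [Finset.mem_univ, true_imp_iff]
  rw [hw, run_markStep a u m le_rfl, ← ite_and]
  have hs : ∀ t : Fin T, (stepVal u t = 1 ↔ u t = true) ∧ (stepVal u t = -1 ↔ u t = false) := by
    intro t
    rw [stepVal_eq_ite u t.2]
    cases u t <;> simp
  have hiff : ((a + pht u T, markAt m T) = (b, false) ∧
      ∀ t : Fin T, (markAt m t = true → u t = true) ∧
          (m t = true → u t = false ∧ 1 ≤ a + pht u t) ∧
          (u t = true → 0 ≤ a + pht u t ∨ (t : ℕ) < N) ∧
          (u t = false → 1 ≤ a + pht u t ∨ N ≤ (t : ℕ))) ↔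
      (IsBounded N a u ∧ a + pht u T = b) ∧ ∀ t : Fin T, m t = true → IsValleyStep a u t := by
    rw [Prod.mk.injEq]
    constructor
    · rintro ⟨⟨h1, h2⟩, h3⟩
      refine ⟨⟨fun t ht => ?_, h1⟩, fun t ht => ?_⟩
      · have h4 := h3 ⟨t, ht⟩
        have h5 := hs ⟨t, ht⟩
        exact ⟨fun e => h4.2.2.1 (h5.1.1 e), fun e => h4.2.2.2 (h5.2.1 e)⟩
      · have h4 := (h3 t).2.1 ht
        refine ⟨(hs t).2.2 h4.1, ?_, h4.2⟩
        have hm : markAt m (t + 1) = true := by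
          rw [markAt, dif_pos t.2]
          exact ht
        by_cases hT : (t : ℕ) + 1 < T
        · exact (hs ⟨t + 1, hT⟩).1.2 ((h3 ⟨t + 1, hT⟩).1 hm)
        · have : (t : ℕ) + 1 = T := by omega
          rw [this, h2] at hm
          cases hm
    · rintro ⟨⟨h1, h2⟩, h3⟩
      have h6 : ∀ t ≤ T, markAt m t = true → stepVal u t = 1 := by
        intro t ht hm
        cases t with
        | zero => simp [markAt] at hm
        | succ t =>
          rw [markAt, dif_pos (by omega)] at hm
          exact (h3 _ hm).2.1
      refine ⟨⟨h2, ?_⟩, fun t => ⟨fun hm => (hs t).1.1 (h6 t t.2.le hm), fun hm => ?_, ?_, ?_⟩⟩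
      · by_contra hm
        have := h6 T le_rfl (by simpa using hm)
        rw [stepVal_eq_zero u le_rfl] at this
        omega
      · exact ⟨(hs t).2.1 (h3 t hm).1, (h3 t hm).2.2⟩
      · exact fun e => (h1 t t.2).1 ((hs t).1.2 e)
      · exact fun e => (h1 t t.2).2 ((hs t).2.2 e)
  rw [if_congr hiff rfl rfl]
  split_ifs with hc
  · refine congrArg _ (Finset.prod_congr rfl fun t _ => ?_)
    cases hm : m t
    · rfl
    · have := (hc.2 t hm).1
      rw [pht_succ, this, ← sub_eq_add_neg, add_sub_assoc]
  · rfl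

theorem sum_marks {ι : Type*} [Fintype ι] [DecidableEq ι] (P C : ι → Prop) (c : ι → F) :
    (∑ m : ι → Bool, if (∀ i, m i = true → P i) ∧ ∀ i, C i → m i = true then
      ∏ i, (if m i then c i else 1) else 0) =
    ∏ i, ((if P i then c i else 0) + if C i then 0 else 1) := by
  have h : ∀ i, ((if P i then c i else 0) + if C i then 0 else 1) =
      ∑ e : Bool, if (e = true → P i) ∧ (C i → e = true) then (if e then c i else 1) else 0 := by
    intro i
    simp
  simp only [h]
  rw [Finset.prod_univ_sum, Fintype.piFinset_univ]
  refine Finset.sum_congr rfl fun m _ => ?_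
  rw [Finset.prod_ite_zero]
  simp only [Finset.mem_univ, true_imp_iff, forall_and]

end MarkedWords

section Extension

variable {F : Type*} [Field F]

/-- The path `s` preceded by `p` up-steps, and completed by down-steps to a path of length `T`. -/
def extWord (p T : ℕ) {L : ℕ} (s : Fin L → Bool) : Fin T → Bool := fun t =>
  if (t : ℕ) < p then true else if h : (t : ℕ) - p < L then s ⟨t - p, h⟩ else false

/-- The `L` steps of `u` following the first `p` ones. -/
def midWord (p L : ℕ) {T : ℕ} (u : Fin T → Bool) : Fin L → Bool := fun j =>
  if h : p + (j : ℕ) < T then u ⟨p + j, h⟩ else false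

theorem stepVal_extWord {p T L : ℕ} (s : Fin L → Bool) {t : ℕ} (h : t < T) :
    stepVal (extWord p T s) t =
      if t < p then 1 else if t < p + L then stepVal s (t - p) else -1 := by
  rw [stepVal_eq_ite _ h, extWord]
  by_cases h1 : t < p
  · simp [h1]
  · by_cases h2 : t - p < L
    · have h3 : t < p + L := by omega
      simp [h1, h2, h3, stepVal_eq_ite s h2]
    · have h3 : ¬ t < p + L := by omega
      simp [h1, h2, h3]

theorem stepVal_midWord {p L T : ℕ} (u : Fin T → Bool) (hT : p + L ≤ T) {j : ℕ} (h : j < L) :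
    stepVal (midWord p L u) j = stepVal u (p + j) := by
  have h1 : p + j < T := by omega
  rw [stepVal_eq_ite _ h, stepVal_eq_ite _ h1, midWord, dif_pos h1]

theorem midWord_extWord {p L T : ℕ} (s : Fin L → Bool) (hT : p + L ≤ T) :
    midWord p L (extWord p T s) = s := by
  funext j
  have h1 : p + (j : ℕ) < T := by omega
  simp [midWord, extWord, h1]

theorem pht_extWord_left {p T L : ℕ} (s : Fin L → Bool) (hT : p + L ≤ T) {t : ℕ} (h : t ≤ p) :
    pht (extWord p T s) t = t := by
  induction t with
  | zero => simp [pht_zero]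
  | succ t ih =>
    rw [pht_succ, ih (by omega), stepVal_extWord s (by omega), if_pos (by omega)]
    simp

theorem pht_extWord_mid {p T L : ℕ} (s : Fin L → Bool) (hT : p + L ≤ T) {j : ℕ} (h : j ≤ L) :
    pht (extWord p T s) (p + j) = p + pht s j := by
  induction j with
  | zero => simp [pht_zero, pht_extWord_left s hT le_rfl]
  | succ j ih =>
    rw [← add_assoc, pht_succ, ih (by omega), stepVal_extWord s (by omega), if_neg (by omega),
      if_pos (by omega), pht_succ, Nat.add_sub_cancel_left, add_assoc]

theorem pht_extWord_right {p T L : ℕ} (s : Fin L → Bool) {r : ℕ}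
    (hr : p + L + r ≤ T) : pht (extWord p T s) (p + L + r) = p + pht s L - r := by
  induction r with
  | zero => simp [pht_extWord_mid s (show p + L ≤ T by omega) le_rfl]
  | succ r ih =>
    rw [← add_assoc, pht_succ, ih (by omega), stepVal_extWord s (by omega), if_neg (by omega),
      if_neg (by omega)]
    push_cast
    ring

theorem pht_extWord {p T L : ℕ} (s : Fin L → Bool) (hs : IsDyck s) (hT : p + L ≤ T) {t : ℕ}
    (ht : t ≤ T) :
    (t ≤ p ∧ pht (extWord p T s) t = t) ∨
    (p ≤ t ∧ t ≤ p + L ∧ pht (extWord p T s) t = p + pht s (t - p) ∧ 0 ≤ pht s (t - p)) ∨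
    (p + L ≤ t ∧ pht (extWord p T s) t = 2 * p + L - t) := by
  by_cases h1 : t ≤ p
  · exact Or.inl ⟨h1, pht_extWord_left s hT h1⟩
  right
  by_cases h2 : t ≤ p + L
  · left
    obtain ⟨j, rfl⟩ : ∃ j, t = p + j := ⟨t - p, by omega⟩
    rw [Nat.add_sub_cancel_left]
    exact ⟨by omega, h2, pht_extWord_mid s hT (by omega),
      hs.1 j (Finset.mem_range.2 (by omega))⟩
  · right
    obtain ⟨r, rfl⟩ : ∃ r, t = p + L + r := ⟨t - (p + L), by omega⟩
    refine ⟨by omega, ?_⟩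
    rw [pht_extWord_right s ht, hs.2]
    push_cast
    ring

theorem isBounded_extWord {N p q L : ℕ} (s : Fin L → Bool) (hs : IsDyck s)
    (hL : p + L + q = 2 * N) (hp : p ≤ N) (hq : q ≤ N) :
    IsBounded N (-p) (extWord p (2 * N) s) ∧
      -(p : ℤ) + pht (extWord p (2 * N) s) (2 * N) = -q := by
  constructor
  · intro t ht
    have h1 := pht_extWord s hs (show p + L ≤ 2 * N by omega) ht.le
    have h2 := pht_extWord s hs (show p + L ≤ 2 * N by omega) (show t + 1 ≤ 2 * N by omega)
    have h3 := pht_succ (extWord p (2 * N) s) t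
    have h4 := stepVal_extWord (p := p) s ht
    refine ⟨fun e => ?_, fun e => ?_⟩ <;> rw [e] at h3 h4 <;> split_ifs at h4 <;> omega
  · have := pht_extWord_right (p := p) (T := 2 * N) s (r := q) (by omega)
    rw [hL] at this
    rw [this, hs.2]
    ring

theorem IsBounded.pht_of_le {N p T : ℕ} {u : Fin T → Bool} (hu : IsBounded N (-p) u) {t : ℕ}
    (ht : t ≤ T) (htN : t ≤ N) :
    (t ≤ p → pht u t = t) ∧ (p ≤ t → 0 ≤ -(p : ℤ) + pht u t) := by
  induction t with
  | zero => rw [pht_zero]; omega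
  | succ t ih =>
    have h1 := ih (by omega) (by omega)
    have h2 := hu t (by omega)
    have h3 := pht_succ u t
    rcases stepVal_eq_or u (show t < T by omega) with e | e <;> rw [e] at h3 h2 <;> omega

theorem IsBounded.pht_of_ge {N p q : ℕ} {u : Fin (2 * N) → Bool} (hu : IsBounded N (-p) u)
    (hend : -(p : ℤ) + pht u (2 * N) = -q) {r : ℕ} (hr : r ≤ N) :
    (r ≤ q → -(p : ℤ) + pht u (2 * N - r) = r - q) ∧
      (q ≤ r → 0 ≤ -(p : ℤ) + pht u (2 * N - r)) := by
  induction r with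
  | zero => rw [Nat.sub_zero]; omega
  | succ r ih =>
    have h1 := ih (by omega)
    have h2 := hu (2 * N - (r + 1)) (by omega)
    have h3 := pht_succ u (2 * N - (r + 1))
    have h4 : 2 * N - (r + 1) + 1 = 2 * N - r := by omega
    rw [h4] at h3
    rcases stepVal_eq_or u (show 2 * N - (r + 1) < 2 * N by omega) with e | e <;>
      rw [e] at h3 h2 <;> omega

theorem pht_midWord {p L T : ℕ} (u : Fin T → Bool) (hT : p + L ≤ T) {j : ℕ} (h : j ≤ L) :
    pht (midWord p L u) j = pht u (p + j) - pht u p := by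
  induction j with
  | zero => simp [pht_zero]
  | succ j ih =>
    rw [pht_succ, ih (by omega), stepVal_midWord u hT (by omega), ← add_assoc, pht_succ]
    ring

theorem IsBounded.nonneg_of_mem {N p q L : ℕ} {u : Fin (2 * N) → Bool} (hu : IsBounded N (-p) u)
    (hend : -(p : ℤ) + pht u (2 * N) = -q) (hL : p + L + q = 2 * N) {t : ℕ} (hpt : p ≤ t)
    (htL : t ≤ p + L) : 0 ≤ -(p : ℤ) + pht u t := by
  by_cases h : t ≤ N
  · exact (hu.pht_of_le (by omega) h).2 hpt
  · have h2 := hu.pht_of_ge hend (r := 2 * N - t) (by omega)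
    rw [show 2 * N - (2 * N - t) = t by omega] at h2
    exact h2.2 (by omega)

theorem isDyck_midWord {N p q L : ℕ} {u : Fin (2 * N) → Bool} (hu : IsBounded N (-p) u)
    (hend : -(p : ℤ) + pht u (2 * N) = -q) (hL : p + L + q = 2 * N) (hp : p ≤ N) (hq : q ≤ N) :
    IsDyck (midWord p L u) := by
  have hp0 : pht u p = p := by
    have := hu.pht_of_le (t := p) (by omega) hp
    omega
  constructor
  · intro j hj
    have hj' := Finset.mem_range.1 hj
    rw [pht_midWord u (by omega) (by omega), hp0]
    have := hu.nonneg_of_mem hend hL (t := p + j) (by omega) (by omega)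
    omega
  · rw [pht_midWord u (by omega) le_rfl, hp0]
    have h2 := hu.pht_of_ge hend (r := q) hq
    rw [show 2 * N - q = p + L by omega] at h2
    omega

theorem extWord_midWord {N p q L : ℕ} {u : Fin (2 * N) → Bool} (hu : IsBounded N (-p) u)
    (hend : -(p : ℤ) + pht u (2 * N) = -q) (hL : p + L + q = 2 * N) (hp : p ≤ N) (hq : q ≤ N) :
    extWord p (2 * N) (midWord p L u) = u := by
  funext t
  rw [extWord]
  split_ifs with h1 h2
  · have h3 := hu.pht_of_le (t := t) (by omega) (by omega)
    have h4 := hu.pht_of_le (t := t + 1) (by omega) (by omega)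
    have h5 := pht_succ u t
    rw [stepVal_eq_ite u t.2] at h5
    cases h : u t
    · rw [Fin.eta, h] at h5
      simp at h5
      omega
    · rfl
  · have h3 : p + ((t : ℕ) - p) < 2 * N := by omega
    rw [midWord, dif_pos h3]
    congr 1
    ext
    simp only
    omega
  · have h3 := hu.pht_of_ge hend (r := 2 * N - t) (by omega)
    have h4 := hu.pht_of_ge hend (r := 2 * N - (t + 1)) (by omega)
    rw [show 2 * N - (2 * N - (t : ℕ)) = t by omega] at h3
    rw [show 2 * N - (2 * N - ((t : ℕ) + 1)) = t + 1 by omega] at h4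
    have h5 := pht_succ u t
    rw [stepVal_eq_ite u t.2] at h5
    cases h : u t
    · rfl
    · rw [Fin.eta, h] at h5
      simp at h5
      omega

theorem sum_isBounded {M : Type*} [AddCommMonoid M] {N p q L : ℕ} (hL : p + L + q = 2 * N)
    (hp : p ≤ N) (hq : q ≤ N) (f : (Fin (2 * N) → Bool) → M) :
    (∑ u : Fin (2 * N) → Bool,
      if IsBounded N (-p) u ∧ -(p : ℤ) + pht u (2 * N) = -q then f u else 0) =
    ∑ s ∈ dyckPaths L, f (extWord p (2 * N) s) := by
  rw [← Finset.sum_filter]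
  refine Finset.sum_bij' (fun u _ => midWord p L u) (fun s _ => extWord p (2 * N) s) ?_ ?_ ?_ ?_ ?_
  · intro u hu
    have h := (Finset.mem_filter.1 hu).2
    exact Finset.mem_filter.2 ⟨Finset.mem_univ _, isDyck_midWord h.1 h.2 hL hp hq⟩
  · intro s hs
    have h := (Finset.mem_filter.1 hs).2
    exact Finset.mem_filter.2 ⟨Finset.mem_univ _, isBounded_extWord s h hL hp hq⟩
  · intro u hu
    have h := (Finset.mem_filter.1 hu).2
    exact extWord_midWord h.1 h.2 hL hp hq
  · intro s hs
    exact midWord_extWord s (by omega)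
  · intro u hu
    have h := (Finset.mem_filter.1 hu).2
    rw [extWord_midWord h.1 h.2 hL hp hq]

theorem isValleyStep_extWord {p T L : ℕ} (s : Fin L → Bool) (hs : IsDyck s) (hT : p + L ≤ T)
    (t : ℕ) :
    IsValleyStep (-p) (extWord p T s) t ↔ p ≤ t ∧ t - p + 1 ∈ valleys s := by
  have hv : t - p + 1 ∈ valleys s ↔
      t - p + 1 < L ∧ stepVal s (t - p) = -1 ∧ stepVal s (t - p + 1) = 1 := by
    rw [valleys, Finset.mem_filter, Finset.mem_Icc, Nat.add_sub_cancel]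
    refine ⟨fun h => ⟨by omega, h.2⟩, fun h => ⟨by omega, h.2⟩⟩
  rw [hv, IsValleyStep]
  constructor
  · rintro ⟨h1, h2, h3⟩
    have ht : t + 1 < T := by
      by_contra h
      rw [stepVal_eq_zero _ (by omega)] at h2
      omega
    rw [stepVal_extWord s (by omega)] at h1 h2
    split_ifs at h1 h2 with c1 c2 c3 c4 c5 <;> try omega
    rw [show t + 1 - p = t - p + 1 by omega] at h2
    exact ⟨by omega, by omega, h1, h2⟩
  · rintro ⟨h1, h2, h3, h4⟩
    have h5 := hs.1 (t - p + 1) (Finset.mem_range.2 (by omega))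
    rw [pht_succ, h3] at h5
    have h6 := pht_extWord_mid s hT (j := t - p) (by omega)
    rw [show p + (t - p) = t by omega] at h6
    rw [stepVal_extWord s (show t < T by omega), stepVal_extWord s (show t + 1 < T by omega),
      if_neg (show ¬ t < p by omega), if_pos (show t < p + L by omega),
      if_neg (show ¬ t + 1 < p by omega), if_pos (show t + 1 < p + L by omega),
      show t + 1 - p = t - p + 1 by omega, h6]
    exact ⟨h3, h4, by omega⟩

theorem prod_pointWt_extWord (f : ℤ × ℕ → F) {N p T L : ℕ} (s : Fin L → Bool) (hs : IsDyck s)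
    (hT : p + L < T) (a : ℤ) (ha : a = p - N) :
    ∏ t : Fin T, pointWt f N t (-(p : ℤ) + pht (extWord p T s) t) =
      ∏ j ∈ Finset.range (L + 1), f (ptOf a s j) := by
  rw [← Finset.prod_range fun t => pointWt f N t (-(p : ℤ) + pht (extWord p T s) t)]
  symm
  refine Finset.prod_of_injOn (fun j => p + j) (fun i _ j _ h => by simpa using h) ?_ ?_ ?_
  · intro j hj
    simp only [Finset.coe_range, Set.mem_Iio] at hj ⊢
    omega
  · intro t ht hn
    have ht' := Finset.mem_range.1 ht
    have h1 : t < p ∨ p + L < t := by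
      by_contra h
      exact hn ⟨t - p, by simp only [Finset.coe_range, Set.mem_Iio]; omega, by simp only; omega⟩
    have h2 := pht_extWord s hs hT.le ht'.le
    rw [pointWt, if_neg (by omega)]
  · intro j hj
    have hj' := Finset.mem_range.1 hj
    have h0 := hs.1 j hj
    rw [pht_extWord_mid s hT.le (by omega), neg_add_cancel_left, pointWt, if_pos h0, ptOf, ha]
    congr 2
    push_cast
    ring

theorem prod_valleys_extWord (f : ℤ × ℕ → F) {N p T L : ℕ} (s : Fin L → Bool) (hs : IsDyck s)
    (hT : p + L < T) (a : ℤ) (ha : a = p - N) :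
    (∏ t : Fin T, if IsValleyStep (-p) (extWord p T s) t then
      f (((t + 1 : ℕ) : ℤ) - N, (-(p : ℤ) + pht (extWord p T s) (t + 1)).toNat) else 1) =
      ∏ j ∈ valleys s, f (ptOf a s j) := by
  rw [← Finset.prod_range fun t => if IsValleyStep (-p) (extWord p T s) t then
    f (((t + 1 : ℕ) : ℤ) - N, (-(p : ℤ) + pht (extWord p T s) (t + 1)).toNat) else 1]
  have hv : ∀ j ∈ valleys s, 1 ≤ j ∧ j < L := by
    intro j hj
    have := Finset.mem_Icc.1 (Finset.mem_filter.1 hj).1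
    omega
  symm
  refine Finset.prod_of_injOn (fun j => p + j - 1) ?_ ?_ ?_ ?_
  · intro i hi j hj h
    have := hv i hi
    have := hv j hj
    simp only at h
    omega
  · intro j hj
    have := hv j hj
    simp only [Finset.coe_range, Set.mem_Iio]
    omega
  · intro t ht hn
    rw [if_neg]
    rw [isValleyStep_extWord s hs hT.le]
    rintro ⟨h1, h2⟩
    exact hn ⟨t - p + 1, h2, by simp only; omega⟩
  · intro j hj
    have hj' := hv j hj
    have h1 : p + j - 1 - p + 1 = j := by omega
    have h2 : p + j - 1 + 1 = p + j := by omega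
    rw [if_pos ((isValleyStep_extWord s hs hT.le _).2 ⟨by omega, by rwa [h1]⟩), h2,
      pht_extWord_mid s hT.le (by omega), neg_add_cancel_left, ptOf, ha]
    congr 2
    push_cast
    ring

end Extension

section Tuples

variable {F : Type*} [Field F]

theorem sum_arrow_prod {ι A B M : Type*} [Fintype ι] [DecidableEq ι] [Fintype A] [Fintype B]
    [AddCommMonoid M] (f : (ι → A × B) → M) :
    ∑ w, f w = ∑ u : ι → A, ∑ m : ι → B, f fun i => (u i, m i) := by
  rw [← Fintype.sum_prod_type']
  exact (Equiv.sum_comp (Equiv.arrowProdEquivProdArrow ι (fun _ => A) (fun _ => B)).symm f).symm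

theorem sum_arrow_arrow_prod {ι κ A B M : Type*} [Fintype ι] [Fintype κ]
    [DecidableEq ι] [DecidableEq κ]
    [Fintype A] [Fintype B] [AddCommMonoid M] (f : (ι → κ → A × B) → M) :
    ∑ w, f w = ∑ u : ι → κ → A, ∑ m : ι → κ → B, f fun i t => (u i t, m i t) := by
  rw [← Equiv.sum_comp (Equiv.curry ι κ (A × B)) f, sum_arrow_prod,
    ← Equiv.sum_comp (Equiv.curry ι κ A)]
  refine Finset.sum_congr rfl fun u _ => ?_
  rw [← Equiv.sum_comp (Equiv.curry ι κ B)]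
  rfl

theorem sum_runWt (wt wte : ℤ × ℕ → F) {N p q L : ℕ} (hL : p + L + q = 2 * N) (hp : p ≤ N)
    (hq : q ≤ N) (hq0 : 0 < q) (a : ℤ) (ha : a = p - N) :
    (∑ w : Fin (2 * N) → Bool × Bool,
      if run markStep (-(p : ℤ), false) w (2 * N) = (-(q : ℤ), false) then
        runWt markStep (markWt wt wte N) 0 (-(p : ℤ), false) w else 0) =
      ∑ s ∈ dyckPaths L, wtVal wt wte a s := by
  rw [sum_arrow_prod]
  simp only [runWt_markStep]
  have h : ∀ u : Fin (2 * N) → Bool, (∑ m : Fin (2 * N) → Bool,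
      if (IsBounded N (-p) u ∧ -(p : ℤ) + pht u (2 * N) = -q) ∧
          ∀ t : Fin (2 * N), m t = true → IsValleyStep (-p) u t then
        (∏ t : Fin (2 * N), pointWt wt N t (-(p : ℤ) + pht u t)) *
          ∏ t : Fin (2 * N), (if m t then
            wte (((t + 1 : ℕ) : ℤ) - N, (-(p : ℤ) + pht u (t + 1)).toNat) - 1 else 1)
      else 0) =
      if IsBounded N (-p) u ∧ -(p : ℤ) + pht u (2 * N) = -q then
        (∏ t : Fin (2 * N), pointWt wt N t (-(p : ℤ) + pht u t)) *
          ∏ t : Fin (2 * N), if IsValleyStep (-p) u t then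
            wte (((t + 1 : ℕ) : ℤ) - N, (-(p : ℤ) + pht u (t + 1)).toNat) else 1
      else 0 := by
    intro u
    split_ifs with hu
    · have hs := sum_marks (fun t : Fin (2 * N) => IsValleyStep (-p) u t) (fun _ => False)
        fun t => wte (((t + 1 : ℕ) : ℤ) - N, (-(p : ℤ) + pht u (t + 1)).toNat) - 1
      simp only [false_imp_iff, implies_true, and_true, if_false] at hs
      simp only [hu, true_and, ← mul_ite_zero]
      rw [← Finset.mul_sum, hs]
      refine congrArg _ (Finset.prod_congr rfl fun t _ => ?_)
      split_ifs <;> simp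
    · exact Finset.sum_eq_zero fun m _ => if_neg fun h => hu h.1
  rw [Finset.sum_congr rfl fun u _ => h u, sum_isBounded hL hp hq]
  refine Finset.sum_congr rfl fun s hs => ?_
  have hs' := (Finset.mem_filter.1 hs).2
  rw [prod_pointWt_extWord wt s hs' (by omega) a ha,
    prod_valleys_extWord wte s hs' (by omega) a ha, wtVal]

/-- The path `i` meets its predecessor at time `t`. -/
def Touches {k T : ℕ} (a : Fin k → ℤ) (u : Fin k → Fin T → Bool) (i : Fin k) (t : ℕ) : Prop :=
  ∃ j : Fin k, (j : ℕ) + 1 = i ∧ a j + pht (u j) t = a i + pht (u i) t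

/-- Consecutive paths are weakly ordered and share no step. -/
def IsOrdered {k T : ℕ} (a : Fin k → ℤ) (u : Fin k → Fin T → Bool) : Prop :=
  ∀ i j : Fin k, (i : ℕ) + 1 = j →
    (∀ t ≤ T, a i + pht (u i) t ≤ a j + pht (u j) t) ∧
      ∀ t < T, ¬(a i + pht (u i) t = a j + pht (u j) t ∧
        a i + pht (u i) (t + 1) = a j + pht (u j) (t + 1))

theorem rel_of_lt_of_rel_succ {S : Type*} (r : S → S → Prop) (hr : ∀ a b c, r a b → r b c → r a c)
    {k : ℕ} (f : Fin k → S) (h : ∀ i j : Fin k, (i : ℕ) + 1 = j → r (f i) (f j)) (i j : Fin k)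
    (hij : i < j) : r (f i) (f j) := by
  obtain ⟨j, hj⟩ := j
  induction j with
  | zero => exact absurd hij (by simp [Fin.lt_def])
  | succ j ih =>
    have hij' : (i : ℕ) < j + 1 := hij
    by_cases e : (i : ℕ) = j
    · exact h i _ (by simp only; omega)
    · have hlt : i < ⟨j, by omega⟩ := by
        rw [Fin.lt_def]
        simp only
        omega
      exact hr _ _ _ (ih (by omega) hlt) (h _ _ rfl)

theorem forall_markLT_iff {k T : ℕ} (a : Fin k → ℤ)
    (ha : ∀ i j : Fin k, (i : ℕ) + 1 = j → a i < a j ∧ (a j - a i) % 2 = 0)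
    (u m : Fin k → Fin T → Bool)
    (hm : ∀ i t, m i t = true → IsValleyStep (a i) (u i) t) :
    (∀ t ≤ T, ∀ i j : Fin k, i < j →
      markLT (a i + pht (u i) t, markAt (m i) t) (a j + pht (u j) t, markAt (m j) t)) ↔
    IsOrdered a u ∧ ∀ (i : Fin k) (t : Fin T), Touches a u i (t + 1) → m i t = true := by
  have hmark : ∀ (i : Fin k) (t : Fin T), markAt (m i) (t + 1) = m i t := fun i t => by
    rw [markAt, dif_pos t.2]
  constructor
  · intro h
    have hlt : ∀ i j : Fin k, (i : ℕ) + 1 = j → i < j := fun i j hij => by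
      rw [Fin.lt_def]
      omega
    refine ⟨fun i j hij => ⟨fun t ht => ?_, fun t ht he => ?_⟩, fun i t ⟨j, hji, he⟩ => ?_⟩
    · obtain ⟨-, h1 | h1⟩ := h t ht i j (hlt i j hij)
      · exact h1.le
      · exact h1.1.le
    · have h1 := (h t ht.le i j (hlt i j hij)).2.resolve_left he.1.not_lt
      have h2 := (h (t + 1) ht i j (hlt i j hij)).2.resolve_left he.2.not_lt
      have h3 : m j ⟨t, ht⟩ = true := (hmark j ⟨t, ht⟩).symm.trans h2.2.2
      have h4 : stepVal (u j) t = -1 := (hm j ⟨t, ht⟩ h3).1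
      cases t with
      | zero => exact absurd he.1 (by simpa [pht_zero] using (ha i j hij).1.ne)
      | succ t =>
        have h5 : m j ⟨t, by omega⟩ = true := (hmark j ⟨t, by omega⟩).symm.trans h1.2.2
        have h6 : stepVal (u j) (t + 1) = 1 := (hm j ⟨t, by omega⟩ h5).2.1
        omega
    · have h1 := (h (t + 1) t.2 j i (hlt j i hji)).2.resolve_left he.not_lt
      exact (hmark i t).symm.trans h1.2.2
  · rintro ⟨h1, h2⟩ t ht
    refine rel_of_lt_of_rel_succ markLT (fun _ _ _ => markLT_trans) _ fun i j hij => ?_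
    have h3 := (h1 i j hij).1 t ht
    have h4 := pht_emod_two (u i) ht
    have h5 := pht_emod_two (u j) ht
    have h6 := ha i j hij
    refine ⟨by simp only; omega, ?_⟩
    rcases h3.lt_or_eq with h3 | h3
    · exact Or.inl h3
    refine Or.inr ⟨h3, ?_⟩
    cases t with
    | zero => exact absurd h3 (by simpa [pht_zero] using h6.1.ne)
    | succ t =>
      have h7 := h2 j ⟨t, ht⟩ ⟨i, hij, h3⟩
      have h8 := hmark j ⟨t, ht⟩
      have h9 := hmark i ⟨t, ht⟩
      simp only at h8 h9 ⊢
      rw [h8, h9]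
      refine ⟨?_, h7⟩
      by_contra hc
      have h10 := (hm j ⟨t, ht⟩ h7).1
      have h11 := (hm i ⟨t, ht⟩ (by simpa using hc)).1
      refine (h1 i j hij).2 t ht ⟨?_, h3⟩
      rw [pht_succ, pht_succ] at h3
      simp only at h10 h11
      omega

theorem ite_forall_prod {ι : Type*} [Fintype ι] (P : ι → Prop) [∀ i, Decidable (P i)]
    [Decidable (∀ i, P i)] (f : ι → F) :
    (if ∀ i, P i then ∏ i, f i else 0) = ∏ i, if P i then f i else 0 := by
  split_ifs with h
  · exact Finset.prod_congr rfl fun i _ => (if_pos (h i)).symm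
  · obtain ⟨i, hi⟩ := not_forall.1 h
    exact (Finset.prod_eq_zero (Finset.mem_univ i) (if_neg hi)).symm

theorem sum_prod_runWt (wt wte : ℤ × ℕ → F) (N : ℕ) {k T : ℕ} (a b : Fin k → ℤ)
    (ha : ∀ i j : Fin k, (i : ℕ) + 1 = j → a i < a j ∧ (a j - a i) % 2 = 0) :
    (∑ w : Fin k → Fin T → Bool × Bool,
      if (∀ i, run markStep (a i, false) (w i) T = (b i, false)) ∧
          ∀ t ≤ T, ∀ i j, i < j → markLT (run markStep (a i, false) (w i) t)
            (run markStep (a j, false) (w j) t) then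
        ∏ i, runWt markStep (markWt wt wte N) 0 (a i, false) (w i) else 0) =
    ∑ u : Fin k → Fin T → Bool,
      if (∀ i, IsBounded N (a i) (u i) ∧ a i + pht (u i) T = b i) ∧ IsOrdered a u then
        ∏ i, ((∏ t : Fin T, pointWt wt N t (a i + pht (u i) t)) *
          ∏ t : Fin T, ((if IsValleyStep (a i) (u i) t then
            wte (((t + 1 : ℕ) : ℤ) - N, (a i + pht (u i) (t + 1)).toNat) - 1 else 0) +
              if Touches a u i (t + 1) then 0 else 1))
      else 0 := by
  rw [sum_arrow_arrow_prod]
  refine Finset.sum_congr rfl fun u _ => ?_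
  have hterm : ∀ m : Fin k → Fin T → Bool,
      (if (∀ i, run markStep (a i, false) (fun t => (u i t, m i t)) T = (b i, false)) ∧
          ∀ t ≤ T, ∀ i j, i < j → markLT (run markStep (a i, false) (fun t => (u i t, m i t)) t)
            (run markStep (a j, false) (fun t => (u j t, m j t)) t) then
        ∏ i, runWt markStep (markWt wt wte N) 0 (a i, false) (fun t => (u i t, m i t)) else 0) =
      if (∀ i, IsBounded N (a i) (u i) ∧ a i + pht (u i) T = b i) ∧ IsOrdered a u then
        (∏ i, ∏ t : Fin T, pointWt wt N t (a i + pht (u i) t)) *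
          if (∀ x : Fin k × Fin T, m x.1 x.2 = true → IsValleyStep (a x.1) (u x.1) x.2) ∧
              ∀ x : Fin k × Fin T, Touches a u x.1 (x.2 + 1) → m x.1 x.2 = true then
            ∏ x : Fin k × Fin T, (if m x.1 x.2 then wte (((x.2 + 1 : ℕ) : ℤ) - N,
              (a x.1 + pht (u x.1) (x.2 + 1)).toNat) - 1 else 1)
          else 0
      else 0 := by
    intro m
    refine (if_congr and_comm rfl rfl).trans ?_
    rw [ite_and, ite_forall_prod]
    simp only [runWt_markStep]
    rw [← ite_forall_prod, ← ite_and, mul_ite_zero, ← ite_and, Finset.prod_mul_distrib,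
      Fintype.prod_prod_type]
    refine if_congr ?_ rfl rfl
    have hrun : (∀ t ≤ T, ∀ i j : Fin k, i < j →
          markLT (run markStep (a i, false) (fun t => (u i t, m i t)) t)
            (run markStep (a j, false) (fun t => (u j t, m j t)) t)) ↔
        ∀ t ≤ T, ∀ i j : Fin k, i < j →
          markLT (a i + pht (u i) t, markAt (m i) t) (a j + pht (u j) t, markAt (m j) t) := by
      refine forall_congr' fun t => forall_congr' fun ht => ?_
      simp only [run_markStep _ _ _ ht]
    rw [hrun]
    constructor
    · rintro ⟨h1, h2⟩
      have h3 := (forall_markLT_iff a ha u m fun i => (h2 i).2).1 h1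
      exact ⟨⟨fun i => (h2 i).1, h3.1⟩, fun x => (h2 x.1).2 x.2, fun x => h3.2 x.1 x.2⟩
    · rintro ⟨⟨h1, h2⟩, h3, h4⟩
      exact ⟨(forall_markLT_iff a ha u m fun i t => h3 (i, t)).2 ⟨h2, fun i t => h4 (i, t)⟩,
        fun i => ⟨h1 i, fun t => h3 (i, t)⟩⟩
  rw [Finset.sum_congr rfl fun m _ => hterm m]
  split_ifs
  · rw [← Finset.mul_sum, ← Equiv.sum_comp (Equiv.curry (Fin k) (Fin T) Bool),
      Finset.prod_mul_distrib]
    refine congrArg _ ?_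
    refine (sum_marks (fun x : Fin k × Fin T => IsValleyStep (a x.1) (u x.1) x.2)
      (fun x => Touches a u x.1 (x.2 + 1)) fun x => wte (((x.2 + 1 : ℕ) : ℤ) - N,
        (a x.1 + pht (u x.1) (x.2 + 1)).toNat) - 1).trans ?_
    rw [Fintype.prod_prod_type]
  · simp

theorem aht_extWord {N p m T : ℕ} (s : Fin (2 * m) → Bool) (hN : p + m = N) (hT : p + 2 * m ≤ T)
    {t : ℕ} (h1 : p ≤ t) (h2 : t ≤ p + 2 * m) :
    aht m s ((t : ℤ) - N) = -(p : ℤ) + pht (extWord p T s) t := by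
  obtain ⟨j, rfl⟩ : ∃ j, t = p + j := ⟨t - p, by omega⟩
  rw [pht_extWord_mid s hT (by omega), aht, neg_add_cancel_left]
  congr 1
  omega

theorem pathLE_iff {N p₁ p₂ m₁ m₂ : ℕ} (s₁ : Fin (2 * m₁) → Bool) (s₂ : Fin (2 * m₂) → Bool)
    (hs₁ : IsDyck s₁) (hs₂ : IsDyck s₂) (h₁ : p₁ + m₁ = N) (h₂ : p₂ + m₂ = N) (hp : p₂ < p₁) :
    PathLE m₁ m₂ s₁ s₂ ↔
      (∀ t ≤ 2 * N, -(p₁ : ℤ) + pht (extWord p₁ (2 * N) s₁) t ≤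
          -(p₂ : ℤ) + pht (extWord p₂ (2 * N) s₂) t) ∧
        ∀ t < 2 * N, ¬(-(p₁ : ℤ) + pht (extWord p₁ (2 * N) s₁) t =
            -(p₂ : ℤ) + pht (extWord p₂ (2 * N) s₂) t ∧
          -(p₁ : ℤ) + pht (extWord p₁ (2 * N) s₁) (t + 1) =
            -(p₂ : ℤ) + pht (extWord p₂ (2 * N) s₂) (t + 1)) := by
  have e₁ : ∀ t, p₁ ≤ t → t ≤ p₁ + 2 * m₁ →
      aht m₁ s₁ ((t : ℤ) - N) = -(p₁ : ℤ) + pht (extWord p₁ (2 * N) s₁) t :=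
    fun t h h' => aht_extWord s₁ h₁ (by omega) h h'
  have e₂ : ∀ t, p₁ ≤ t → t ≤ p₁ + 2 * m₁ →
      aht m₂ s₂ ((t : ℤ) - N) = -(p₂ : ℤ) + pht (extWord p₂ (2 * N) s₂) t :=
    fun t h h' => aht_extWord s₂ h₂ (by omega) (by omega) (by omega)
  have c₁ := fun (t : ℕ) (ht : t ≤ 2 * N) =>
    pht_extWord (p := p₁) s₁ hs₁ (show p₁ + 2 * m₁ ≤ 2 * N by omega) ht
  have c₂ := fun (t : ℕ) (ht : t ≤ 2 * N) =>
    pht_extWord (p := p₂) s₂ hs₂ (show p₂ + 2 * m₂ ≤ 2 * N by omega) ht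
  have hx : ∀ x ∈ Finset.Icc (-(m₁ : ℤ)) m₁, ∃ t : ℕ, x = (t : ℤ) - N ∧ p₁ ≤ t ∧
      t ≤ p₁ + 2 * m₁ := by
    intro x hx
    have := Finset.mem_Icc.1 hx
    exact ⟨(x + N).toNat, by omega, by omega, by omega⟩
  constructor
  · rintro ⟨h3, h4⟩
    refine ⟨fun t ht => ?_, fun t ht he => ?_⟩
    · by_cases hc : p₁ ≤ t ∧ t ≤ p₁ + 2 * m₁
      · rw [← e₁ t hc.1 hc.2, ← e₂ t hc.1 hc.2]
        exact h3 _ (Finset.mem_Icc.2 (by omega))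
      · have := c₁ t ht
        have := c₂ t ht
        omega
    · by_cases hc : p₁ ≤ t ∧ t < p₁ + 2 * m₁
      · have h5 := h4 ((t : ℤ) - N) (Finset.mem_Icc.2 (by omega))
        have h6 : (t : ℤ) - N + 1 = ((t + 1 : ℕ) : ℤ) - N := by push_cast; ring
        rw [h6, e₁ t hc.1 hc.2.le, e₂ t hc.1 hc.2.le, e₁ (t + 1) (by omega) (by omega),
          e₂ (t + 1) (by omega) (by omega)] at h5
        exact h5 he
      · have := c₁ t ht.le
        have := c₂ t ht.le
        have := c₁ (t + 1) ht
        have := c₂ (t + 1) ht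
        omega
  · rintro ⟨h3, h4⟩
    refine ⟨fun x hx' => ?_, fun x hx' he => ?_⟩
    · obtain ⟨t, rfl, h5, h6⟩ := hx x hx'
      rw [e₁ t h5 h6, e₂ t h5 h6]
      exact h3 t (by omega)
    · have hx'' := Finset.mem_Icc.1 hx'
      obtain ⟨t, rfl, h5, h6⟩ := hx x (Finset.mem_Icc.2 (by omega))
      have h7 : (t : ℤ) - N + 1 = ((t + 1 : ℕ) : ℤ) - N := by push_cast; ring
      rw [h7, e₁ t h5 h6, e₂ t h5 h6, e₁ (t + 1) (by omega) (by omega),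
        e₂ (t + 1) (by omega) (by omega)] at he
      exact h4 t (by omega) he

theorem isValleyStep_of_touch {a₁ a₂ : ℤ} {T : ℕ} (u₁ u₂ : Fin T → Bool)
    (hle : ∀ t ≤ T, a₁ + pht u₁ t ≤ a₂ + pht u₂ t)
    (hstep : ∀ t < T, ¬(a₁ + pht u₁ t = a₂ + pht u₂ t ∧
      a₁ + pht u₁ (t + 1) = a₂ + pht u₂ (t + 1))) {t : ℕ} (ht : t + 1 < T)
    (h : a₁ + pht u₁ (t + 1) = a₂ + pht u₂ (t + 1)) (h0 : 0 ≤ a₂ + pht u₂ (t + 1)) :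
    IsValleyStep a₂ u₂ t := by
  have h1 := hle t (by omega)
  have h2 := hle (t + 1 + 1) (by omega)
  have h3 := hstep t (by omega)
  have h4 := hstep (t + 1) ht
  have h5 := pht_succ u₁ t
  have h6 := pht_succ u₂ t
  have h7 := pht_succ u₁ (t + 1)
  have h8 := pht_succ u₂ (t + 1)
  rw [IsValleyStep]
  rcases stepVal_eq_or u₁ (show t < T by omega) with e₁ | e₁ <;>
    rcases stepVal_eq_or u₂ (show t < T by omega) with e₂ | e₂ <;>
    rcases stepVal_eq_or u₁ ht with e₃ | e₃ <;>
    rcases stepVal_eq_or u₂ ht with e₄ | e₄ <;>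
    rw [e₁] at h5 <;> rw [e₂] at h6 <;> rw [e₃] at h7 <;> rw [e₄] at h8 <;>
    rw [e₂, e₄] <;> omega

theorem prod_touch_extWord (f : ℤ × ℕ → F) {N p₁ p₂ m₁ m₂ : ℕ} (s₁ : Fin (2 * m₁) → Bool)
    (s₂ : Fin (2 * m₂) → Bool) (hs₁ : IsDyck s₁) (hs₂ : IsDyck s₂) (h₁ : p₁ + m₁ = N)
    (h₂ : p₂ + m₂ = N) (hp : p₂ < p₁) :
    (∏ t : Fin (2 * N), if -(p₁ : ℤ) + pht (extWord p₁ (2 * N) s₁) (t + 1) =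
        -(p₂ : ℤ) + pht (extWord p₂ (2 * N) s₂) (t + 1) then
      f (((t + 1 : ℕ) : ℤ) - N, (-(p₂ : ℤ) + pht (extWord p₂ (2 * N) s₂) (t + 1)).toNat) else 1) =
      interProd f m₁ m₂ s₁ s₂ := by
  have e₁ : ∀ t, p₁ ≤ t → t ≤ p₁ + 2 * m₁ →
      aht m₁ s₁ ((t : ℤ) - N) = -(p₁ : ℤ) + pht (extWord p₁ (2 * N) s₁) t :=
    fun t h h' => aht_extWord s₁ h₁ (by omega) h h'
  have e₂ : ∀ t, p₁ ≤ t → t ≤ p₁ + 2 * m₁ →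
      aht m₂ s₂ ((t : ℤ) - N) = -(p₂ : ℤ) + pht (extWord p₂ (2 * N) s₂) t :=
    fun t h h' => aht_extWord s₂ h₂ (by omega) (by omega) (by omega)
  rw [← Finset.prod_range fun t => if -(p₁ : ℤ) + pht (extWord p₁ (2 * N) s₁) (t + 1) =
        -(p₂ : ℤ) + pht (extWord p₂ (2 * N) s₂) (t + 1) then
      f (((t + 1 : ℕ) : ℤ) - N, (-(p₂ : ℤ) + pht (extWord p₂ (2 * N) s₂) (t + 1)).toNat) else 1,
    interProd]
  have hmem : ∀ x ∈ interPts m₁ m₂ s₁ s₂,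
      (-(m₁ : ℤ) ≤ x ∧ x ≤ m₁) ∧ aht m₁ s₁ x = aht m₂ s₂ x := by
    intro x hx
    have := Finset.mem_filter.1 hx
    exact ⟨Finset.mem_Icc.1 this.1, this.2⟩
  symm
  refine Finset.prod_of_injOn (fun x : ℤ => (x + N).toNat - 1) ?_ ?_ ?_ ?_
  · intro x hx y hy h
    have := hmem x hx
    have := hmem y hy
    simp only at h
    omega
  · intro x hx
    have := hmem x hx
    simp only [Finset.coe_range, Set.mem_Iio]
    omega
  · intro t ht hn
    have ht' := Finset.mem_range.1 ht
    rw [if_neg]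
    intro he
    have c₁ := pht_extWord (p := p₁) s₁ hs₁ (show p₁ + 2 * m₁ ≤ 2 * N by omega)
      (show t + 1 ≤ 2 * N by omega)
    have c₂ := pht_extWord (p := p₂) s₂ hs₂ (show p₂ + 2 * m₂ ≤ 2 * N by omega)
      (show t + 1 ≤ 2 * N by omega)
    have hc : p₁ ≤ t + 1 ∧ t + 1 ≤ p₁ + 2 * m₁ := by omega
    refine hn ⟨((t + 1 : ℕ) : ℤ) - N, Finset.mem_filter.2 ⟨Finset.mem_Icc.2 (by omega), ?_⟩, ?_⟩
    · rw [e₁ _ hc.1 hc.2, e₂ _ hc.1 hc.2, he]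
    · simp only
      omega
  · intro x hx
    obtain ⟨h3, h4⟩ := hmem x hx
    obtain ⟨t, rfl, h5, h6⟩ : ∃ t : ℕ, x = ((t + 1 : ℕ) : ℤ) - N ∧ p₁ ≤ t + 1 ∧
        t + 1 ≤ p₁ + 2 * m₁ := ⟨(x + N).toNat - 1, by omega, by omega, by omega⟩
    have h7 : (((t + 1 : ℕ) : ℤ) - N + N).toNat - 1 = t := by omega
    rw [h7, h4, e₂ _ h5 h6]
    rw [e₁ _ h5 h6, e₂ _ h5 h6] at h4
    rw [if_pos h4]

end Tuples

section Determinant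

variable {F : Type*} [Field F]

/-- The number of up-steps prepended to the path with index `i`. -/
def depth (k i : ℕ) : ℕ := 2 * (k - i)

/-- The paths of a tuple, extended to the common length `2 * (n + 2 * k)`. -/
def extTuple {n k : ℕ} (D : DyckTuple n k) (i : Fin k) : Fin (2 * (n + 2 * k)) → Bool :=
  extWord (depth k i) (2 * (n + 2 * k)) (D i)

theorem depth_add {n k i : ℕ} (hi : i < k) : depth k i + (n + 2 * i) = n + 2 * k := by
  rw [depth]
  omega

theorem depth_succ_lt {k i : ℕ} (hi : i < k) : depth k (i + 1) < depth k i := by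
  rw [depth, depth]
  omega

theorem isOrdered_extTuple {n k : ℕ} (D : DyckTuple n k) (hD : ∀ i, IsDyck (D i)) :
    IsOrdered (fun i : Fin k => -(depth k i : ℤ)) (extTuple D) ↔
      ∀ (i : ℕ) (h : i + 1 < k),
        PathLE (n + 2 * i) (n + 2 * (i + 1)) (D ⟨i, by omega⟩) (D ⟨i + 1, h⟩) := by
  have hP : ∀ (i : ℕ) (h : i + 1 < k), _ := fun i h =>
    pathLE_iff (D ⟨i, by omega⟩) (D ⟨i + 1, h⟩) (hD _) (hD _)
      (depth_add (n := n) (show i < k by omega)) (depth_add h)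
      (depth_succ_lt (by omega))
  constructor
  · intro h i hi
    exact (hP i hi).2 (h ⟨i, by omega⟩ ⟨i + 1, hi⟩ rfl)
  · rintro h ⟨i, hi⟩ ⟨j, hj⟩ hij
    obtain rfl : i + 1 = j := hij
    exact (hP i hj).1 (h i hj)

theorem sum_isOrdered {M : Type*} [AddCommMonoid M] (n k : ℕ)
    (f : (Fin k → Fin (2 * (n + 2 * k)) → Bool) → M) :
    (∑ u : Fin k → Fin (2 * (n + 2 * k)) → Bool,
      if (∀ i : Fin k, IsBounded (n + 2 * k) (-(depth k i : ℤ)) (u i) ∧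
          -(depth k i : ℤ) + pht (u i) (2 * (n + 2 * k)) = -(depth k i : ℤ)) ∧
        IsOrdered (fun i : Fin k => -(depth k i : ℤ)) u then f u else 0) =
      ∑ D ∈ weakTuples n k, f (extTuple D) := by
  have hle : ∀ i : Fin k, depth k i ≤ n + 2 * k := fun i => by
    have := depth_add (n := n) i.2
    omega
  have hL : ∀ i : Fin k, depth k i + 2 * (n + 2 * (i : ℕ)) + depth k i = 2 * (n + 2 * k) :=
    fun i => by
      have := depth_add (n := n) i.2
      omega
  let mid (u : Fin k → Fin (2 * (n + 2 * k)) → Bool) : DyckTuple n k := fun i =>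
    midWord (depth k i) (2 * (n + 2 * (i : ℕ))) (u i)
  have hmid : ∀ u : Fin k → Fin (2 * (n + 2 * k)) → Bool,
      (∀ i : Fin k, IsBounded (n + 2 * k) (-(depth k i : ℤ)) (u i) ∧
          -(depth k i : ℤ) + pht (u i) (2 * (n + 2 * k)) = -(depth k i : ℤ)) →
        extTuple (mid u) = u := fun u hu =>
    funext fun i => extWord_midWord (hu i).1 (hu i).2 (hL i) (hle i) (hle i)
  rw [← Finset.sum_filter]
  refine Finset.sum_bij' (fun u _ => mid u) (fun D _ => extTuple D) ?_ ?_ ?_ ?_ ?_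
  · intro u hu
    have h := (Finset.mem_filter.1 hu).2
    have hD : ∀ i, IsDyck (mid u i) := fun i =>
      isDyck_midWord (h.1 i).1 (h.1 i).2 (hL i) (hle i) (hle i)
    refine Finset.mem_filter.2 ⟨Finset.mem_univ _, hD, (isOrdered_extTuple _ hD).1 ?_⟩
    rw [hmid u h.1]
    exact h.2
  · intro D hD
    have h := (Finset.mem_filter.1 hD).2
    exact Finset.mem_filter.2 ⟨Finset.mem_univ _,
      fun i => isBounded_extWord (D i) (h.1 i) (hL i) (hle i) (hle i),
      (isOrdered_extTuple D h.1).2 h.2⟩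
  · intro u hu
    exact hmid u (Finset.mem_filter.1 hu).2.1
  · intro D _
    exact funext fun i => midWord_extWord (D i) (by have := hL i; omega)
  · intro u hu
    rw [hmid u (Finset.mem_filter.1 hu).2.1]

theorem isValleyStep_of_touches {n k : ℕ} {D : DyckTuple n k} (hD : ∀ i, IsDyck (D i))
    (ho : IsOrdered (fun i : Fin k => -(depth k i : ℤ)) (extTuple D)) (i : Fin k) {t : ℕ}
    (ht : t < 2 * (n + 2 * k))
    (h : Touches (fun i : Fin k => -(depth k i : ℤ)) (extTuple D) i (t + 1)) :
    IsValleyStep (-(depth k i : ℤ)) (extTuple D i) t := by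
  obtain ⟨j, hji, he⟩ := h
  have hi := depth_add (n := n) i.2
  have hj := depth_add (n := n) j.2
  have ci := pht_extWord (p := depth k i) (D i) (hD i)
    (show depth k i + 2 * (n + 2 * (i : ℕ)) ≤ 2 * (n + 2 * k) by omega)
    (show t + 1 ≤ 2 * (n + 2 * k) by omega)
  have cj := pht_extWord (p := depth k j) (D j) (hD j)
    (show depth k j + 2 * (n + 2 * (j : ℕ)) ≤ 2 * (n + 2 * k) by omega)
    (show t + 1 ≤ 2 * (n + 2 * k) by omega)
  have he' : -(depth k j : ℤ) + pht (extWord (depth k j) (2 * (n + 2 * k)) (D j)) (t + 1) =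
    -(depth k i : ℤ) + pht (extWord (depth k i) (2 * (n + 2 * k)) (D i)) (t + 1) := he
  have hpos : 0 < depth k i := by
    rw [depth]
    omega
  refine isValleyStep_of_touch (extTuple D j) (extTuple D i) (ho j i hji).1 (ho j i hji).2
    (by omega) he ?_
  simp only [extTuple]
  omega

theorem prod_touches (f : ℤ × ℕ → F) {n k : ℕ} (D : DyckTuple n k) (hD : ∀ i, IsDyck (D i)) :
    (∏ i : Fin k, ∏ t : Fin (2 * (n + 2 * k)),
      if Touches (fun i : Fin k => -(depth k i : ℤ)) (extTuple D) i (t + 1) then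
        f (((t + 1 : ℕ) : ℤ) - (n + 2 * k : ℕ),
          (-(depth k i : ℤ) + pht (extTuple D i) (t + 1)).toNat) else 1) =
      ∏ j : Fin (k - 1), interProd f (n + 2 * (j : ℕ)) (n + 2 * ((j : ℕ) + 1))
        (D ⟨(j : ℕ), by have := j.isLt; omega⟩) (D ⟨(j : ℕ) + 1, by have := j.isLt; omega⟩) := by
  cases k with
  | zero => rfl
  | succ k =>
    rw [Fin.prod_univ_succ, Finset.prod_eq_one, one_mul]
    · refine Finset.prod_congr rfl fun j _ => ?_
      have hj := j.2
      rw [← prod_touch_extWord f (D ⟨(j : ℕ), by omega⟩) (D ⟨(j : ℕ) + 1, by omega⟩) (hD _) (hD _)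
        (depth_add (n := n) (show (j : ℕ) < k + 1 by omega))
        (depth_add (show (j : ℕ) + 1 < k + 1 by omega)) (depth_succ_lt (by omega))]
      refine Finset.prod_congr rfl fun t _ => if_congr ⟨?_, fun h => ?_⟩ rfl rfl
      · rintro ⟨⟨i, hi⟩, hij, he⟩
        obtain rfl : i = j := by simpa using hij
        exact he
      · exact ⟨⟨j, by omega⟩, rfl, h⟩
    · intro t _
      refine if_neg ?_
      rintro ⟨i, hi, -⟩
      simp at hi

theorem prod_eq_of_mem_weakTuples (wt wte : ℤ × ℕ → F) (hwte : ∀ p, wte p ≠ 0) {n k : ℕ}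
    {D : DyckTuple n k} (h : D ∈ weakTuples n k) :
    (∏ i : Fin k, ((∏ t : Fin (2 * (n + 2 * k)),
        pointWt wt (n + 2 * k) t (-(depth k i : ℤ) + pht (extTuple D i) t)) *
      ∏ t : Fin (2 * (n + 2 * k)),
        ((if IsValleyStep (-(depth k i : ℤ)) (extTuple D i) t then
          wte (((t + 1 : ℕ) : ℤ) - (n + 2 * k : ℕ),
            (-(depth k i : ℤ) + pht (extTuple D i) (t + 1)).toNat) - 1 else 0) +
          if Touches (fun i : Fin k => -(depth k i : ℤ)) (extTuple D) i (t + 1) then 0 else 1))) =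
      (∏ i : Fin k, wtVal wt wte (-(n : ℤ) - 2 * (i : ℕ)) (D i)) *
        ∏ j : Fin (k - 1),
          interProd (fun p => 1 - (wte p)⁻¹) (n + 2 * (j : ℕ)) (n + 2 * ((j : ℕ) + 1))
            (D ⟨(j : ℕ), by have := j.isLt; omega⟩)
            (D ⟨(j : ℕ) + 1, by have := j.isLt; omega⟩) := by
  obtain ⟨hD, hle⟩ := (Finset.mem_filter.1 h).2
  have ho := (isOrdered_extTuple D hD).2 hle
  rw [← prod_touches _ D hD, ← Finset.prod_mul_distrib]
  refine Finset.prod_congr rfl fun i _ => ?_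
  have hi := depth_add (n := n) i.2
  have hpos : 0 < depth k i := by
    rw [depth]
    omega
  have hlt : depth k i + 2 * (n + 2 * (i : ℕ)) < 2 * (n + 2 * k) := by omega
  have ha : -(n : ℤ) - 2 * (i : ℕ) = (depth k i : ℕ) - (n + 2 * k : ℕ) := by omega
  rw [wtVal, ← prod_pointWt_extWord wt (D i) (hD i) hlt _ ha,
    ← prod_valleys_extWord wte (D i) (hD i) hlt _ ha, mul_assoc]
  refine congrArg₂ (· * ·) rfl ?_
  rw [← Finset.prod_mul_distrib]
  refine Finset.prod_congr rfl fun t _ => ?_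
  have hv := isValleyStep_of_touches hD ho i t.2
  rw [extTuple] at hv ⊢
  have hw := hwte (((t + 1 : ℕ) : ℤ) - (n + 2 * k : ℕ),
    (-(depth k i : ℤ) + pht (extWord (depth k i) (2 * (n + 2 * k)) (D i)) (t + 1)).toNat)
  by_cases hT : Touches (fun i : Fin k => -(depth k i : ℤ)) (extTuple D) i (t + 1)
  · rw [if_pos hT, if_pos hT, if_pos (hv hT), if_pos (hv hT), mul_sub, mul_one,
      mul_inv_cancel₀ hw, add_zero]
  · rw [if_neg hT, if_neg hT, mul_one]
    split_ifs <;> simp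

end Determinant

theorem statement_10 {F : Type*} [Field F] (wt wte : ℤ × ℕ → F)
    (hwte : ∀ p, wte p ≠ 0) (n k : ℕ) :
    (Matrix.of fun i j : Fin k =>
        ∑ s ∈ dyckPaths (2 * n + 2 * (i : ℕ) + 2 * (j : ℕ)),
          wtVal wt wte (-(n : ℤ) - 2 * (i : ℕ)) s).det =
      weakSum wt wte n k := by
  have hstart : ∀ i j : Fin k, i < j →
      markLT (-(depth k i : ℤ), false) (-(depth k j : ℤ), false) := by
    intro i j hij
    have hij' : (i : ℕ) < j := hij
    have := j.2
    rw [markLT, depth, depth]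
    simp only
    omega
  have hentry : ∀ i j : Fin k, _ := fun i j => sum_runWt wt wte (N := n + 2 * k) (p := depth k i)
    (q := depth k j) (L := 2 * n + 2 * (i : ℕ) + 2 * (j : ℕ)) (by rw [depth, depth]; omega)
    (by rw [depth]; omega) (by rw [depth]; omega) (by rw [depth]; omega)
    (-(n : ℤ) - 2 * (i : ℕ)) (by rw [depth]; omega)
  simp only [← hentry]
  refine (det_runWt markStep (markWt wt wte (n + 2 * k)) markLT _ markLT_key
    (markWt_planar wt wte (n + 2 * k)) (fun j : Fin k => (-(depth k j : ℤ), false)) hstart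
    (2 * (n + 2 * k)) 0 (fun i : Fin k => (-(depth k i : ℤ), false)) hstart).trans ?_
  refine (sum_prod_runWt wt wte (n + 2 * k) (fun i : Fin k => -(depth k i : ℤ))
    (fun i : Fin k => -(depth k i : ℤ)) ?_).trans ?_
  · intro i j hij
    have := j.2
    simp only [depth]
    omega
  · refine (sum_isOrdered n k _).trans ?_
    exact Finset.sum_congr rfl fun D hD => prod_eq_of_mem_weakTuples wt wte hwte hD

end Paper
end
end

section
/- Suppose the weight functions wt and w̃t from ℤ×ℕ to a field satisfy: (i) wt(p)·(w̃t(p) − 1) = c for all p ∈ ℤ×ℕ, for some constant c, with w̃t(p) ≠ 0 for all p; and (ii) there are scalars t_j such that wt_HP(D) = t_j · wt_V(D) for every j and every D ∈ Dyck_{2j} all of whose peaks are high peaks. Then for all positive integers n and k: Σ over tuples (D_1 ≤ ⋯ ≤ D_k) ∈ Dyck^k_{2n} of wt_V(D_1)⋯wt_V(D_k) · Π_{i=1}^{k−1} Π_{p∈D_i∩D_{i+1}} (1 − 1/w̃t(p)) equals Π_{i=1}^{k−1} t_{n+2i}^i times Σ over tuples (D_1 < ⋯ < D_k) ∈ Dyck^k_{2n}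 of wt_V(D_1)⋯wt_V(D_k). -/
open Finset

attribute [local instance 10] Classical.propDecidable

noncomputable section

namespace Paper

section PathHeights

variable {L : ℕ} (s : Fin L → Bool)

lemma stepVal_eq_one_or {j : ℕ} (h : j < L) : stepVal s j = 1 ∨ stepVal s j = -1 := by
  unfold stepVal
  rw [dif_pos h]
  split <;> simp

lemma pht_zero_s13 : pht s 0 = 0 := by simp [pht]

lemma pht_succ_s13 (i : ℕ) : pht s (i + 1) = pht s i + stepVal s i :=
  Finset.sum_range_succ _ _

lemma pht_succ_eq_or {i : ℕ} (h : i < L) :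
    pht s (i + 1) = pht s i + 1 ∨ pht s (i + 1) = pht s i - 1 := by
  rcases stepVal_eq_one_or s h with h | h <;> rw [pht_succ_s13, h]
  · exact Or.inl rfl
  · exact Or.inr rfl

lemma exists_pht_eq {i : ℕ} (h : i ≤ L) : ∃ r : ℤ, pht s i = i + 2 * r := by
  induction i with
  | zero => exact ⟨0, by simp [pht_zero_s13]⟩
  | succ i ih =>
    obtain ⟨r, hr⟩ := ih (by omega)
    rcases pht_succ_eq_or s (show i < L by omega) with h | h
    · exact ⟨r, by push_cast; omega⟩
    · exact ⟨r - 1, by push_cast; omega⟩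

variable {s}

lemma IsDyck.pht_nonneg (h : IsDyck s) {i : ℕ} (hi : i ≤ L) : 0 ≤ pht s i :=
  h.1 i (Finset.mem_range.2 (by omega))

lemma mem_valleys {i : ℕ} : i ∈ valleys s ↔ 1 ≤ i ∧ i < L ∧
    pht s (i - 1) = pht s i + 1 ∧ pht s (i + 1) = pht s i + 1 := by
  rcases i with _ | i
  · simp [valleys]
  · have h1 := pht_succ_s13 s i
    have h2 := pht_succ_s13 s (i + 1)
    simp only [valleys, Finset.mem_filter, Finset.mem_Icc, Nat.add_sub_cancel]
    omega

lemma mem_peaks {i : ℕ} : i ∈ peaks s ↔ 1 ≤ i ∧ i < L ∧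
    pht s (i - 1) = pht s i - 1 ∧ pht s (i + 1) = pht s i - 1 := by
  rcases i with _ | i
  · simp [peaks]
  · have h1 := pht_succ_s13 s i
    have h2 := pht_succ_s13 s (i + 1)
    simp only [peaks, Finset.mem_filter, Finset.mem_Icc, Nat.add_sub_cancel]
    omega

lemma mem_highPeaks {i : ℕ} : i ∈ highPeaks s ↔ i ∈ peaks s ∧ 2 ≤ pht s i := by
  simp [highPeaks]

end PathHeights

/-! ### Exchanging valleys and high peaks -/

section Flip

/-- Reverse both steps around every index in `A`; a valley (resp. peak) in `A` is turned into
a peak (resp. valley). -/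
def flipAt (A : Finset ℕ) {L : ℕ} (s : Fin L → Bool) : Fin L → Bool :=
  fun j => if (j : ℕ) ∈ A ∨ (j : ℕ) + 1 ∈ A then !s j else s j

variable {L : ℕ} {A : Finset ℕ} {s : Fin L → Bool}

lemma flipAt_flipAt (A : Finset ℕ) (s : Fin L → Bool) : flipAt A (flipAt A s) = s := by
  funext j
  simp only [flipAt]
  split <;> simp

/-- `flipAt A` as a permutation of the paths. -/
def flipEquiv (L : ℕ) (A : Finset ℕ) : (Fin L → Bool) ≃ (Fin L → Bool) :=
  ⟨flipAt A, flipAt A, flipAt_flipAt A, flipAt_flipAt A⟩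

lemma stepVal_flipAt (j : ℕ) : stepVal (flipAt A s) j =
    if j ∈ A ∨ j + 1 ∈ A then -stepVal s j else stepVal s j := by
  by_cases hj : j < L
  · simp only [stepVal, dif_pos hj, flipAt]
    by_cases h : j ∈ A ∨ j + 1 ∈ A <;> by_cases hb : s ⟨j, hj⟩ = true <;> simp [h, hb]
  · simp [stepVal, hj]

lemma pht_flipAt {e : ℤ} (he : e ≠ 0)
    (hA : ∀ i ∈ A, 1 ≤ i ∧ stepVal s (i - 1) = -e ∧ stepVal s i = e) (i : ℕ) :
    pht (flipAt A s) i = pht s i + if i ∈ A then 2 * e else 0 := by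
  induction i with
  | zero =>
    have : 0 ∉ A := fun h => by have := (hA 0 h).1; omega
    simp [pht_zero_s13, this]
  | succ i ih =>
    rw [pht_succ_s13, pht_succ_s13, ih, stepVal_flipAt]
    by_cases h1 : i ∈ A <;> by_cases h2 : i + 1 ∈ A
    · have a := (hA _ h1).2.2
      have b := (hA _ h2).2.1
      rw [Nat.add_sub_cancel] at b
      exact absurd (by omega) he
    · have a := (hA _ h1).2.2
      simp only [h1, h2, a, true_or, if_true, if_false]
      ring
    · have b := (hA _ h2).2.1
      rw [Nat.add_sub_cancel] at b
      simp only [h1, h2, b, or_true, if_true, if_false]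
      ring
    · simp [h1, h2]

lemma turn_of_subset_valleys (hA : A ⊆ valleys s) (i : ℕ) (hi : i ∈ A) :
    1 ≤ i ∧ stepVal s (i - 1) = -1 ∧ stepVal s i = 1 := by
  have := hA hi
  simp only [valleys, Finset.mem_filter, Finset.mem_Icc] at this
  omega

lemma turn_of_subset_highPeaks (hA : A ⊆ highPeaks s) (i : ℕ) (hi : i ∈ A) :
    1 ≤ i ∧ stepVal s (i - 1) = -(-1) ∧ stepVal s i = -1 := by
  have := hA hi
  simp only [highPeaks, peaks, Finset.mem_filter, Finset.mem_Icc] at this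
  omega

lemma pht_flipAt_of_valleys (hA : A ⊆ valleys s) (i : ℕ) :
    pht (flipAt A s) i = pht s i + if i ∈ A then 2 else 0 :=
  pht_flipAt one_ne_zero (turn_of_subset_valleys hA) i

lemma pht_flipAt_of_highPeaks (hA : A ⊆ highPeaks s) (i : ℕ) :
    pht (flipAt A s) i = pht s i + if i ∈ A then -2 else 0 :=
  pht_flipAt (by norm_num) (turn_of_subset_highPeaks hA) i

lemma subset_highPeaks_flipAt (hs : IsDyck s) (hA : A ⊆ valleys s) :
    A ⊆ highPeaks (flipAt A s) := by
  intro i hi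
  have h := turn_of_subset_valleys hA i hi
  have hv := hA hi
  have h0 := hs.pht_nonneg (mem_valleys.1 hv).2.1.le
  simp only [valleys, Finset.mem_filter, Finset.mem_Icc] at hv
  have hi' : i - 1 + 1 ∈ A := by rwa [Nat.sub_add_cancel h.1]
  simp only [highPeaks, peaks, Finset.mem_filter, Finset.mem_Icc, stepVal_flipAt,
    pht_flipAt_of_valleys hA, hi, hi', or_true, true_or, if_true]
  omega

lemma subset_valleys_flipAt (hA : A ⊆ highPeaks s) : A ⊆ valleys (flipAt A s) := by
  intro i hi
  have h := turn_of_subset_highPeaks hA i hi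
  have hv := hA hi
  simp only [highPeaks, peaks, Finset.mem_filter, Finset.mem_Icc] at hv
  have hi' : i - 1 + 1 ∈ A := by rwa [Nat.sub_add_cancel h.1]
  simp only [valleys, Finset.mem_filter, Finset.mem_Icc, stepVal_flipAt, hi, hi', or_true,
    true_or, if_true]
  omega

lemma isDyck_flipAt_of_valleys (hs : IsDyck s) (hA : A ⊆ valleys s) : IsDyck (flipAt A s) := by
  refine ⟨fun i hi => ?_, ?_⟩
  · have := hs.1 i hi
    rw [pht_flipAt_of_valleys hA]
    split <;> omega
  · have : L ∉ A := fun h => by have := (mem_valleys.1 (hA h)).2.1; omega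
    rw [pht_flipAt_of_valleys hA, hs.2, if_neg this, add_zero]

lemma isDyck_flipAt_of_highPeaks (hs : IsDyck s) (hA : A ⊆ highPeaks s) :
    IsDyck (flipAt A s) := by
  refine ⟨fun i hi => ?_, ?_⟩
  · have := hs.1 i hi
    rw [pht_flipAt_of_highPeaks hA]
    split
    · rename_i h
      have := (mem_highPeaks.1 (hA h)).2
      omega
    · omega
  · have : L ∉ A := fun h => by
      have := (mem_peaks.1 (mem_highPeaks.1 (hA h)).1).2.1
      omega
    rw [pht_flipAt_of_highPeaks hA, hs.2, if_neg this, add_zero]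

lemma subset_valleys_iff_flipAt (Q : ℕ → ℤ → Prop) :
    (A ⊆ valleys s ∧ IsDyck s ∧ ∀ i ∈ Finset.range (L + 1), i ∉ A → Q i (pht s i)) ↔
      (A ⊆ highPeaks (flipAt A s) ∧ IsDyck (flipAt A s) ∧
        ∀ i ∈ Finset.range (L + 1), i ∉ A → Q i (pht (flipAt A s) i)) := by
  constructor
  · rintro ⟨hA, hs, hQ⟩
    refine ⟨subset_highPeaks_flipAt hs hA, isDyck_flipAt_of_valleys hs hA, fun i hi hiA => ?_⟩
    rw [pht_flipAt_of_valleys hA, if_neg hiA, add_zero]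
    exact hQ i hi hiA
  · rintro ⟨hA, hs, hQ⟩
    have h1 := subset_valleys_flipAt hA
    have h2 := isDyck_flipAt_of_highPeaks hs hA
    have h3 := pht_flipAt_of_highPeaks hA
    rw [flipAt_flipAt] at h1 h2 h3
    refine ⟨h1, h2, fun i hi hiA => ?_⟩
    rw [h3, if_neg hiA, add_zero]
    exact hQ i hi hiA

variable {F : Type*} [Field F]

/-- The value `x` if `p` holds, and `0` otherwise. -/
def indic (p : Prop) (x : F) : F := if p then x else 0

lemma indic_of_pos {p : Prop} (h : p) (x : F) : indic p x = x := if_pos h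

lemma indic_of_neg {p : Prop} (h : ¬p) (x : F) : indic p x = 0 := if_neg h

lemma indic_congr {p q : Prop} (h : p ↔ q) (x : F) : indic p x = indic q x := by
  rw [propext h]

lemma indic_and (p q : Prop) (x : F) : indic (p ∧ q) x = indic p (indic q x) := by
  by_cases h : p <;> simp [indic, h]

lemma mul_indic (p : Prop) (x y : F) : x * indic p y = indic p (x * y) := by
  by_cases h : p <;> simp [indic, h]

lemma indic_mul_indic (p q : Prop) (x : F) : indic p x * indic q 1 = indic (p ∧ q) x := by
  by_cases hp : p <;> by_cases hq : q <;> simp [indic, hp, hq]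

lemma sum_indic {ι : Type*} (p : Prop) (S : Finset ι) (g : ι → F) :
    ∑ i ∈ S, indic p (g i) = indic p (∑ i ∈ S, g i) := by
  by_cases h : p <;> simp [indic, h]

/-- The weight of a path marked at the indices in `A`. -/
def markedWt (wt wte : ℤ × ℕ → F) (a : ℤ) {L : ℕ} (s : Fin L → Bool) (A : Finset ℕ) : F :=
  (∏ i ∈ Finset.range (L + 1), wt (ptOf a s i)) * ∏ i ∈ A, (wte (ptOf a s i) - 1)

lemma markedWt_eq {wt wte : ℤ × ℕ → F} {c : F} (h1 : ∀ p, wt p * (wte p - 1) = c) (a : ℤ)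
    (hA : A ⊆ Finset.range (L + 1)) : markedWt wt wte a s A =
      ∏ i ∈ Finset.range (L + 1), if i ∈ A then c else wt (ptOf a s i) := by
  have : ∏ i ∈ A, (wte (ptOf a s i) - 1) =
      ∏ i ∈ Finset.range (L + 1), if i ∈ A then wte (ptOf a s i) - 1 else 1 := by
    rw [Finset.prod_ite_mem, Finset.inter_eq_right.2 hA]
  rw [markedWt, this, ← Finset.prod_mul_distrib]
  refine Finset.prod_congr rfl fun i _ => ?_
  split
  · exact h1 _
  · rw [mul_one]

lemma markedWt_flipAt {wt wte : ℤ × ℕ → F} {c : F} (h1 : ∀ p, wt p * (wte p - 1) = c) (a : ℤ)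
    (hA : A ⊆ valleys s) : markedWt wt wte a (flipAt A s) A = markedWt wt wte a s A := by
  have hA' : A ⊆ Finset.range (L + 1) := fun i hi => by
    have := (mem_valleys.1 (hA hi)).2.1
    simp only [Finset.mem_range]
    omega
  rw [markedWt_eq h1 a hA', markedWt_eq h1 a hA']
  refine Finset.prod_congr rfl fun i _ => ?_
  split
  · rfl
  · rename_i h
    rw [ptOf, ptOf, pht_flipAt_of_valleys hA, if_neg h, add_zero]

lemma sum_powerset_eq_sum_powerset_range {V : Finset ℕ} {N : ℕ} (hV : V ⊆ Finset.range N)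
    (p : Prop) (q : Finset ℕ → Prop) (g : Finset ℕ → F) :
    indic p (∑ A ∈ V.powerset, indic (q A) (g A)) =
      ∑ A ∈ (Finset.range N).powerset, indic (A ⊆ V ∧ p ∧ q A) (g A) := by
  have : V.powerset = (Finset.range N).powerset.filter (· ⊆ V) := by
    ext A
    simp only [Finset.mem_powerset, Finset.mem_filter]
    exact ⟨fun h => ⟨h.trans hV, h⟩, fun h => h.2⟩
  rw [this, Finset.sum_filter, ← sum_indic]
  refine Finset.sum_congr rfl fun A _ => ?_
  by_cases h : A ⊆ V <;> by_cases hp : p <;> simp [indic, h, hp]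

lemma sum_valleys_eq_sum_highPeaks {wt wte : ℤ × ℕ → F} {c : F}
    (h1 : ∀ p, wt p * (wte p - 1) = c) (a : ℤ) (L : ℕ) (Q : ℕ → ℤ → Prop) :
    ∑ s : Fin L → Bool, indic (IsDyck s) (∑ A ∈ (valleys s).powerset,
      indic (∀ i ∈ Finset.range (L + 1), i ∉ A → Q i (pht s i)) (markedWt wt wte a s A)) =
    ∑ s : Fin L → Bool, indic (IsDyck s) (∑ A ∈ (highPeaks s).powerset,
      indic (∀ i ∈ Finset.range (L + 1), i ∉ A → Q i (pht s i)) (markedWt wt wte a s A)) := by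
  have hV (s : Fin L → Bool) : valleys s ⊆ Finset.range L := fun i hi =>
    Finset.mem_range.2 (mem_valleys.1 hi).2.1
  have hP (s : Fin L → Bool) : highPeaks s ⊆ Finset.range L := fun i hi =>
    Finset.mem_range.2 (mem_peaks.1 (mem_highPeaks.1 hi).1).2.1
  rw [Finset.sum_congr rfl fun s _ => sum_powerset_eq_sum_powerset_range (hV s) _ _ _,
    Finset.sum_congr rfl fun s _ => sum_powerset_eq_sum_powerset_range (hP s) _ _ _,
    Finset.sum_comm, Finset.sum_comm (s := Finset.univ)]
  refine Finset.sum_congr rfl fun A _ => ?_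
  symm
  rw [← Equiv.sum_comp (flipEquiv L A)]
  refine Finset.sum_congr rfl fun s _ => ?_
  refine (indic_congr (subset_valleys_iff_flipAt Q).symm _).trans ?_
  by_cases h : A ⊆ valleys s
  · exact congrArg _ (markedWt_flipAt h1 a h)
  · rw [indic_of_neg (fun h' => h h'.1), indic_of_neg (fun h' => h h'.1)]

lemma prod_mul_prod_one_sub_inv {ι : Type*} {V T : Finset ι} (hT : T ⊆ V) (g : ι → F)
    (hg : ∀ i, g i ≠ 0) : (∏ i ∈ V, g i) * ∏ i ∈ T, (1 - (g i)⁻¹) =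
      ∑ A ∈ V.powerset, indic (T ⊆ A) (∏ i ∈ A, (g i - 1)) := by
  have hprod : ∏ i ∈ T, (1 - (g i)⁻¹) = ∏ i ∈ V, if i ∈ T then 1 - (g i)⁻¹ else 1 := by
    rw [Finset.prod_ite_mem, Finset.inter_eq_right.2 hT]
  have hsum : (∏ i ∈ V, g i) * ∏ i ∈ T, (1 - (g i)⁻¹) =
      ∏ i ∈ V, ((g i - 1) + if i ∉ T then 1 else 0) := by
    rw [hprod, ← Finset.prod_mul_distrib]
    refine Finset.prod_congr rfl fun i _ => ?_
    by_cases h : i ∈ T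
    · simp [h, mul_sub, hg i]
    · simp [h]
  rw [hsum, Finset.prod_add]
  refine Finset.sum_congr rfl fun A hA => ?_
  rw [Finset.prod_ite_zero, Finset.prod_const_one]
  have : (∀ i ∈ V \ A, i ∉ T) ↔ T ⊆ A := by
    constructor
    · intro h i hi
      by_contra hiA
      exact h i (Finset.mem_sdiff.2 ⟨hT hi, hiA⟩) hi
    · intro h i hi hiT
      exact (Finset.mem_sdiff.1 hi).2 (h hiT)
  by_cases h : T ⊆ A
  · rw [if_pos (this.2 h), indic_of_pos h, mul_one]
  · rw [if_neg (mt this.1 h), indic_of_neg h, mul_zero]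

end Flip

/-! ### Comparing consecutive paths -/

section Compare

lemma forall_mem_Icc_iff (a b : ℤ) (m : ℕ) (ha : a = -m) (P : ℤ → Prop) :
    (∀ x ∈ Finset.Icc a b, P x) ↔ ∀ i : ℕ, (i : ℤ) ≤ b + m → P (-m + i) := by
  subst ha
  constructor
  · intro h i hi
    exact h _ (Finset.mem_Icc.2 ⟨by omega, by omega⟩)
  · intro h x hx
    rw [Finset.mem_Icc] at hx
    have := h (x + m).toNat (by omega)
    rwa [show -(m : ℤ) + ((x + m).toNat : ℕ) = x by omega] at this

variable {m L₁ L₂ : ℕ}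

lemma aht_neg_add (m i : ℕ) {L : ℕ} (s : Fin L → Bool) : aht m s (-m + i) = pht s i := by
  rw [aht]
  congr 1
  omega

lemma aht_add_two_neg_add (m i : ℕ) {L : ℕ} (s : Fin L → Bool) :
    aht (m + 2) s (-m + i) = pht s (i + 2) := by
  rw [aht]
  congr 1
  push_cast
  omega

lemma pathLT_iff {s₁ : Fin L₁ → Bool} {s₂ : Fin L₂ → Bool} :
    PathLT m (m + 2) s₁ s₂ ↔ ∀ i ≤ 2 * m, pht s₁ i < pht s₂ (i + 2) := by
  rw [PathLT, forall_mem_Icc_iff _ _ m rfl]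
  simp only [aht_neg_add, aht_add_two_neg_add]
  exact forall_congr' fun i => by
    rw [show ((i : ℤ) ≤ m + m) ↔ i ≤ 2 * m by omega]

lemma pathLE_iff_s13 {s₁ : Fin L₁ → Bool} {s₂ : Fin L₂ → Bool} :
    PathLE m (m + 2) s₁ s₂ ↔ (∀ i ≤ 2 * m, pht s₁ i ≤ pht s₂ (i + 2)) ∧
      ∀ i < 2 * m, ¬(pht s₁ i = pht s₂ (i + 2) ∧ pht s₁ (i + 1) = pht s₂ (i + 3)) := by
  rw [PathLE, forall_mem_Icc_iff _ _ m rfl, forall_mem_Icc_iff _ _ m rfl]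
  have h (i : ℕ) : -(m : ℤ) + i + 1 = -m + ((i + 1 : ℕ) : ℤ) := by push_cast; ring
  simp only [h, aht_neg_add, aht_add_two_neg_add]
  refine and_congr (forall_congr' fun i => ?_) (forall_congr' fun i => ?_)
  · rw [show ((i : ℤ) ≤ m + m) ↔ i ≤ 2 * m by omega]
  · rw [show ((i : ℤ) ≤ m - 1 + m) ↔ i < 2 * m by omega]

/-- The indices, counted along the lower path, of the common points of two consecutive paths. -/
def touchIdx (m : ℕ) {L₁ L₂ : ℕ} (s₁ : Fin L₁ → Bool) (s₂ : Fin L₂ → Bool) : Finset ℕ :=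
  (Finset.range (2 * m + 1)).filter fun i => pht s₁ i = pht s₂ (i + 2)

lemma mem_touchIdx {s₁ : Fin L₁ → Bool} {s₂ : Fin L₂ → Bool} {i : ℕ} :
    i ∈ touchIdx m s₁ s₂ ↔ i ≤ 2 * m ∧ pht s₁ i = pht s₂ (i + 2) := by
  simp [touchIdx]

lemma interProd_eq {F : Type*} [Field F] (f : ℤ × ℕ → F) (s₁ : Fin L₁ → Bool)
    (s₂ : Fin L₂ → Bool) : interProd f m (m + 2) s₁ s₂ =
      ∏ i ∈ touchIdx m s₁ s₂, f (ptOf (-(m : ℤ)) s₁ i) := by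
  symm
  refine Finset.prod_bij (fun (i : ℕ) _ => -(m : ℤ) + i) ?_ ?_ ?_ ?_
  · intro i hi
    rw [mem_touchIdx] at hi
    simp only [interPts, Finset.mem_filter, Finset.mem_Icc, aht_neg_add, aht_add_two_neg_add]
    exact ⟨by omega, hi.2⟩
  · intro i _ j _ h
    omega
  · intro x hx
    simp only [interPts, Finset.mem_filter, Finset.mem_Icc] at hx
    have h : x = -(m : ℤ) + ((x + m).toNat : ℕ) := by omega
    refine ⟨(x + m).toNat, ?_, h.symm⟩
    rw [h, aht_neg_add, aht_add_two_neg_add] at hx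
    exact mem_touchIdx.2 ⟨by omega, hx.2⟩
  · intro i _
    rw [aht_neg_add, ptOf]

variable {s₁ : Fin (2 * m) → Bool} {s₂ : Fin (2 * (m + 2)) → Bool} {A : Finset ℕ}

lemma pathLT_of_forall_notMem {ι : ℕ → ℕ} (hnext : ∀ i ≤ 2 * m, ι i ∈ A →
      ∃ j ≤ 2 * m, ι j ∉ A ∧ (pht s₁ j < pht s₂ (j + 2) → pht s₁ i < pht s₂ (i + 2))) :
    PathLT m (m + 2) s₁ s₂ ↔ ∀ i ≤ 2 * m, ι i ∉ A → pht s₁ i < pht s₂ (i + 2) := by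
  rw [pathLT_iff]
  refine ⟨fun h i hi _ => h i hi, fun h i hi => ?_⟩
  by_cases hiA : ι i ∈ A
  · obtain ⟨j, hj, hjA, hji⟩ := hnext i hi hiA
    exact hji (h j hj hjA)
  · exact h i hi hiA

lemma pathLE_and_iff {ι : ℕ → ℕ} (hnext : ∀ i ≤ 2 * m, ι i ∈ A →
      ∃ j ≤ 2 * m, ι j ∉ A ∧ (pht s₁ j < pht s₂ (j + 2) → pht s₁ i ≤ pht s₂ (i + 2)))
    (hadj : ∀ i, ι i ∈ A → ι (i + 1) ∉ A) :
    (PathLE m (m + 2) s₁ s₂ ∧ ∀ i ∈ touchIdx m s₁ s₂, ι i ∈ A) ↔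
      ∀ i ≤ 2 * m, ι i ∉ A → pht s₁ i < pht s₂ (i + 2) := by
  rw [pathLE_iff_s13]
  constructor
  · rintro ⟨⟨h, -⟩, ht⟩ i hi hiA
    exact lt_of_le_of_ne (h i hi) fun he => hiA (ht i (mem_touchIdx.2 ⟨hi, he⟩))
  · intro h
    have ht : ∀ i ≤ 2 * m, pht s₁ i = pht s₂ (i + 2) → ι i ∈ A := fun i hi he => by
      by_contra hiA
      exact (h i hi hiA).ne he
    refine ⟨⟨fun i hi => ?_, fun i hi he => ?_⟩, fun i hi => ?_⟩
    · by_cases hiA : ι i ∈ A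
      · obtain ⟨j, hj, hjA, hji⟩ := hnext i hi hiA
        exact hji (h j hj hjA)
      · exact (h i hi hiA).le
    · exact hadj i (ht i hi.le he.1) (ht (i + 1) hi he.2)
    · rw [mem_touchIdx] at hi
      exact ht i hi.1 hi.2

/-- Consecutive paths have the same parity over each abscissa. -/
lemma exists_pht_sub_eq {i : ℕ} (hi : i ≤ 2 * m) :
    ∃ r : ℤ, pht s₂ (i + 2) - pht s₁ i = 2 * r := by
  obtain ⟨r₁, h₁⟩ := exists_pht_eq s₁ hi
  obtain ⟨r₂, h₂⟩ := exists_pht_eq s₂ (show i + 2 ≤ 2 * (m + 2) by omega)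
  exact ⟨r₂ + 1 - r₁, by push_cast at h₂; omega⟩

lemma succ_notMem_of_subset_valleys {L : ℕ} {s : Fin L → Bool} (hA : A ⊆ valleys s) {i : ℕ}
    (hi : i ∈ A) : i + 1 ∉ A := by
  intro h
  have h1 := mem_valleys.1 (hA hi)
  have h2 := mem_valleys.1 (hA h)
  rw [Nat.add_sub_cancel] at h2
  omega

lemma succ_notMem_of_subset_peaks {L : ℕ} {s : Fin L → Bool} (hA : A ⊆ peaks s) {i : ℕ}
    (hi : i ∈ A) : i + 1 ∉ A := by
  intro h
  have h1 := mem_peaks.1 (hA hi)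
  have h2 := mem_peaks.1 (hA h)
  rw [Nat.add_sub_cancel] at h2
  omega

lemma pathLE_and_iff_of_valleys (hm : 0 < m) (hA : A ⊆ valleys s₂) :
    (PathLE m (m + 2) s₁ s₂ ∧ ∀ i ∈ touchIdx m s₁ s₂, i + 2 ∈ A) ↔
      ∀ i ≤ 2 * m, i + 2 ∉ A → pht s₁ i < pht s₂ (i + 2) := by
  refine pathLE_and_iff (ι := (· + 2)) (fun i hi hiA => ?_) fun i hi => ?_
  · have hv := mem_valleys.1 (hA hiA)
    rcases Nat.lt_or_ge i (2 * m) with h | h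
    · refine ⟨i + 1, h, succ_notMem_of_subset_valleys hA hiA, fun hlt => ?_⟩
      obtain ⟨r, hr⟩ := exists_pht_sub_eq (s₁ := s₁) (s₂ := s₂) (show i + 1 ≤ 2 * m by omega)
      have := pht_succ_eq_or s₁ h
      have e : i + 2 + 1 = i + 1 + 2 := rfl
      rw [e] at hv
      omega
    · obtain ⟨j, rfl⟩ : ∃ j, i = j + 1 := ⟨i - 1, by omega⟩
      refine ⟨j, by omega, fun hj => succ_notMem_of_subset_valleys hA hj hiA, fun hlt => ?_⟩
      obtain ⟨r, hr⟩ := exists_pht_sub_eq (s₁ := s₁) (s₂ := s₂) (show j ≤ 2 * m by omega)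
      have := pht_succ_eq_or s₁ (show j < 2 * m by omega)
      have e : j + 1 + 2 - 1 = j + 2 := rfl
      rw [e] at hv
      omega
  · exact succ_notMem_of_subset_valleys hA hi

lemma pathLT_iff_of_peaks (hm : 0 < m) (hA : A ⊆ peaks s₂) :
    PathLT m (m + 2) s₁ s₂ ↔ ∀ i ≤ 2 * m, i + 2 ∉ A → pht s₁ i < pht s₂ (i + 2) := by
  refine pathLT_of_forall_notMem (ι := (· + 2)) fun i hi hiA => ?_
  have hv := mem_peaks.1 (hA hiA)
  rcases Nat.lt_or_ge i (2 * m) with h | h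
  · refine ⟨i + 1, h, succ_notMem_of_subset_peaks hA hiA, fun hlt => ?_⟩
    have := pht_succ_eq_or s₁ h
    have e : i + 2 + 1 = i + 1 + 2 := rfl
    rw [e] at hv
    omega
  · obtain ⟨j, rfl⟩ : ∃ j, i = j + 1 := ⟨i - 1, by omega⟩
    refine ⟨j, by omega, fun hj => succ_notMem_of_subset_peaks hA hj hiA, fun hlt => ?_⟩
    have := pht_succ_eq_or s₁ (show j < 2 * m by omega)
    have e : j + 1 + 2 - 1 = j + 2 := rfl
    rw [e] at hv
    omega

lemma pathLT_iff_of_valleys (hA : A ⊆ valleys s₁) :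
    PathLT m (m + 2) s₁ s₂ ↔ ∀ i ≤ 2 * m, i ∉ A → pht s₁ i < pht s₂ (i + 2) := by
  refine pathLT_of_forall_notMem (ι := id) fun i hi hiA => ?_
  simp only [id] at hiA ⊢
  have hv := mem_valleys.1 (hA hiA)
  refine ⟨i + 1, hv.2.1, succ_notMem_of_subset_valleys hA hiA, fun hlt => ?_⟩
  have := pht_succ_eq_or s₂ (show i + 2 < 2 * (m + 2) by omega)
  have e : i + 2 + 1 = i + 1 + 2 := rfl
  rw [e] at this
  omega

lemma pathLE_and_iff_of_peaks (hA : A ⊆ peaks s₁) :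
    (PathLE m (m + 2) s₁ s₂ ∧ ∀ i ∈ touchIdx m s₁ s₂, i ∈ A) ↔
      ∀ i ≤ 2 * m, i ∉ A → pht s₁ i < pht s₂ (i + 2) := by
  refine pathLE_and_iff (ι := id) (fun i hi hiA => ?_) fun i hi => ?_
  · simp only [id] at hiA ⊢
    have hv := mem_peaks.1 (hA hiA)
    refine ⟨i + 1, hv.2.1, succ_notMem_of_subset_peaks hA hiA, fun hlt => ?_⟩
    obtain ⟨r, hr⟩ := exists_pht_sub_eq (s₁ := s₁) (s₂ := s₂) (show i + 1 ≤ 2 * m by omega)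
    have := pht_succ_eq_or s₂ (show i + 2 < 2 * (m + 2) by omega)
    have e : i + 2 + 1 = i + 1 + 2 := rfl
    rw [e] at this
    omega
  · exact succ_notMem_of_subset_peaks hA hi

lemma peaks_subset_highPeaks_of_pathLT (hm : 0 < m) (h₁ : IsDyck s₁)
    (h : PathLT m (m + 2) s₁ s₂) : peaks s₂ ⊆ highPeaks s₂ := by
  intro i hi
  refine mem_highPeaks.2 ⟨hi, ?_⟩
  rw [mem_peaks] at hi
  rw [pathLT_iff] at h
  have hpos : ∀ j ≤ 2 * m, 0 < pht s₂ (j + 2) := fun j hj =>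
    (h₁.pht_nonneg hj).trans_lt (h j hj)
  rcases Nat.lt_or_ge i 3 with hi3 | hi3
  · have := hpos (i - 1) (by omega)
    rw [show i - 1 + 2 = i + 1 by omega] at this
    omega
  · have := hpos (i - 3) (by omega)
    rw [show i - 3 + 2 = i - 1 by omega] at this
    omega

lemma exists_mem_touchIdx (hm : 0 < m) (h₁ : IsDyck s₁) (h₂ : IsDyck s₂)
    (h : PathLE m (m + 2) s₁ s₂) {i : ℕ} (hi : i ∈ touchIdx m s₁ s₂) :
    i ∈ peaks s₁ ∧ i + 2 ∈ valleys s₂ := by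
  rw [pathLE_iff_s13] at h
  rw [mem_touchIdx] at hi
  obtain ⟨him, he⟩ := hi
  have hlast : pht s₁ (2 * m) = 0 := h₁.2
  have h0 : i ≠ 0 := by
    rintro rfl
    have a := pht_succ_eq_or s₁ (show 0 < 2 * m by omega)
    have b := pht_succ_eq_or s₂ (show 2 < 2 * (m + 2) by omega)
    have c := h₁.pht_nonneg (show 1 ≤ 2 * m by omega)
    have d := h₂.pht_nonneg (show 3 ≤ 2 * (m + 2) by omega)
    have e := h.2 0 (by omega)
    have z := pht_zero_s13 s₁
    simp only [Nat.zero_add, Nat.reduceAdd] at a b e he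
    omega
  obtain ⟨j, rfl⟩ : ∃ j, i = j + 1 := ⟨i - 1, by omega⟩
  have a := pht_succ_eq_or s₁ (show j < 2 * m by omega)
  have b := pht_succ_eq_or s₂ (show j + 2 < 2 * (m + 2) by omega)
  have c := h.1 j (by omega)
  have d := h.2 j (by omega)
  have hj : j + 1 ≠ 2 * m := by
    intro hj
    have c' := h₁.pht_nonneg (show j ≤ 2 * m by omega)
    have d' := h₂.pht_nonneg (show j + 2 ≤ 2 * (m + 2) by omega)
    have z : pht s₁ (j + 1) = 0 := by rw [hj, hlast]
    simp only [Nat.add_assoc, Nat.reduceAdd] at *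
    omega
  have a' := pht_succ_eq_or s₁ (show j + 1 < 2 * m by omega)
  have b' := pht_succ_eq_or s₂ (show j + 3 < 2 * (m + 2) by omega)
  have c' := h.1 (j + 1) (by omega)
  have c'' := h.1 (j + 2) (by omega)
  have d' := h.2 (j + 1) (by omega)
  have e1 : j + 1 - 1 = j := by omega
  have e2 : j + 3 - 1 = j + 2 := by omega
  simp only [mem_peaks, mem_valleys, Nat.add_assoc, Nat.reduceAdd, e1, e2] at *
  omega

end Compare

/-! ### The exchange relations -/

section Exchange

variable {F : Type*} [Field F] {wt wte : ℤ × ℕ → F} {m : ℕ}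

/-- `wt_V` extended by zero to all paths. -/
def dyckWt (wt wte : ℤ × ℕ → F) (m : ℕ) (s : Fin (2 * m) → Bool) : F :=
  if IsDyck s then wtVal wt wte (-(m : ℤ)) s else 0

/-- The interaction of two consecutive weakly ordered paths. -/
def weakKer (wte : ℤ × ℕ → F) (m : ℕ) (s₁ : Fin (2 * m) → Bool)
    (s₂ : Fin (2 * (m + 2)) → Bool) : F :=
  if PathLE m (m + 2) s₁ s₂ then interProd (fun p => 1 - (wte p)⁻¹) m (m + 2) s₁ s₂ else 0

/-- The interaction of two consecutive strictly ordered paths. -/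
def strictKer (F : Type*) [Field F] (m : ℕ) (s₁ : Fin (2 * m) → Bool)
    (s₂ : Fin (2 * (m + 2)) → Bool) : F :=
  if PathLT m (m + 2) s₁ s₂ then 1 else 0

variable {s₁ : Fin (2 * m) → Bool} {s₂ : Fin (2 * (m + 2)) → Bool}

lemma weakKer_mul_wtVal (h2 : ∀ p, wte p ≠ 0) (hm : 0 < m) (h₁ : IsDyck s₁) (h₂ : IsDyck s₂) :
    weakKer wte m s₁ s₂ * wtVal wt wte (-((m + 2 : ℕ) : ℤ)) s₂ =
      ∑ A ∈ (valleys s₂).powerset,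
        indic (∀ i ≤ 2 * m, i + 2 ∉ A → pht s₁ i < pht s₂ (i + 2))
          (markedWt wt wte (-((m + 2 : ℕ) : ℤ)) s₂ A) := by
  rw [Finset.sum_congr rfl fun A hA => indic_congr
    (pathLE_and_iff_of_valleys (s₁ := s₁) hm (Finset.mem_powerset.1 hA)).symm _, weakKer]
  by_cases h : PathLE m (m + 2) s₁ s₂
  · have hT : (touchIdx m s₁ s₂).image (· + 2) ⊆ valleys s₂ := fun i hi => by
      obtain ⟨j, hj, rfl⟩ := Finset.mem_image.1 hi
      exact (exists_mem_touchIdx hm h₁ h₂ h hj).2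
    have hpt : ∏ i ∈ touchIdx m s₁ s₂, (1 - (wte (ptOf (-(m : ℤ)) s₁ i))⁻¹) =
        ∏ i ∈ (touchIdx m s₁ s₂).image (· + 2),
          (1 - (wte (ptOf (-((m + 2 : ℕ) : ℤ)) s₂ i))⁻¹) := by
      rw [Finset.prod_image fun i _ j _ hij => Nat.add_right_cancel hij]
      refine Finset.prod_congr rfl fun i hi => ?_
      rw [ptOf, ptOf, (mem_touchIdx.1 hi).2]
      congr 4
      push_cast
      ring
    rw [if_pos h, interProd_eq, hpt, wtVal, mul_left_comm, mul_comm (∏ i ∈ Finset.image _ _, _),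
      prod_mul_prod_one_sub_inv hT _ fun i => h2 _, Finset.mul_sum]
    refine Finset.sum_congr rfl fun A _ => ?_
    rw [mul_indic]
    refine indic_congr ?_ _
    rw [and_iff_right h, Finset.image_subset_iff]
  · rw [if_neg h, zero_mul]
    exact (Finset.sum_eq_zero fun A _ => indic_of_neg (fun h' => h h'.1) _).symm

lemma wtHigh_mul_weakKer (h2 : ∀ p, wte p ≠ 0) (hm : 0 < m) (h₁ : IsDyck s₁) (h₂ : IsDyck s₂)
    (hp : peaks s₁ ⊆ highPeaks s₁) :
    wtHigh wt wte (-(m : ℤ)) s₁ * weakKer wte m s₁ s₂ =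
      ∑ A ∈ (highPeaks s₁).powerset,
        indic (∀ i ≤ 2 * m, i ∉ A → pht s₁ i < pht s₂ (i + 2))
          (markedWt wt wte (-(m : ℤ)) s₁ A) := by
  have hA {A : Finset ℕ} (hA : A ∈ (highPeaks s₁).powerset) : A ⊆ peaks s₁ :=
    (Finset.mem_powerset.1 hA).trans (Finset.filter_subset _ _)
  rw [Finset.sum_congr rfl fun A h => indic_congr
    (pathLE_and_iff_of_peaks (s₂ := s₂) (hA h)).symm _, weakKer]
  by_cases h : PathLE m (m + 2) s₁ s₂
  · have hT : touchIdx m s₁ s₂ ⊆ highPeaks s₁ := fun i hi =>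
      hp (exists_mem_touchIdx hm h₁ h₂ h hi).1
    rw [if_pos h, interProd_eq, wtHigh, mul_assoc,
      prod_mul_prod_one_sub_inv hT _ fun i => h2 _, Finset.mul_sum]
    refine Finset.sum_congr rfl fun A _ => ?_
    rw [mul_indic]
    exact indic_congr (and_iff_right h).symm _
  · rw [if_neg h, mul_zero]
    exact (Finset.sum_eq_zero fun A _ => indic_of_neg (fun h' => h h'.1) _).symm

lemma wtHigh_eq_sum (h2 : ∀ p, wte p ≠ 0) (a : ℤ) {L : ℕ} (s : Fin L → Bool) :
    wtHigh wt wte a s = ∑ A ∈ (highPeaks s).powerset, markedWt wt wte a s A := by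
  have := prod_mul_prod_one_sub_inv (Finset.empty_subset (highPeaks s))
    (fun i => wte (ptOf a s i)) fun i => h2 _
  simp only [Finset.prod_empty, mul_one, indic_of_pos (Finset.empty_subset _)] at this
  rw [wtHigh, this, Finset.mul_sum]
  rfl

lemma forall_mem_range_iff {A : Finset ℕ} (m : ℕ) (P R : ℕ → ℤ → Prop) (h : ℕ → ℤ) :
    (∀ i ∈ Finset.range (2 * (m + 2) + 1), i ∉ A →
        (∀ j ≤ 2 * m, i = j + 2 → P j (h i)) ∧ R i (h i)) ↔
      (∀ j ≤ 2 * m, j + 2 ∉ A → P j (h (j + 2))) ∧ ∀ i ≤ 2 * (m + 2), i ∉ A → R i (h i) := by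
  constructor
  · intro H
    exact ⟨fun j hj hjA => (H (j + 2) (Finset.mem_range.2 (by omega)) hjA).1 j hj rfl,
      fun i hi hiA => (H i (Finset.mem_range.2 (by omega)) hiA).2⟩
  · rintro ⟨H, H'⟩ i hi hiA
    refine ⟨fun j hj hij => ?_, H' i (by rw [Finset.mem_range] at hi; omega) hiA⟩
    subst hij
    exact H j hj hiA

/-- Weak contact with the lower barrier `s₁` is traded for strict contact, a condition `R` on
the unmarked heights being kept. -/
lemma sum_weakKer_mul_eq {c : F} (h1 : ∀ p, wt p * (wte p - 1) = c) {t : ℕ → F}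
    (h3 : ∀ (j : ℕ) (s : Fin (2 * j) → Bool), IsDyck s → peaks s ⊆ highPeaks s →
      wtHigh wt wte (-(j : ℤ)) s = t j * wtVal wt wte (-(j : ℤ)) s)
    (hm : 0 < m) (h₁ : IsDyck s₁) (R : ℕ → ℤ → Prop)
    (f g : (Fin (2 * (m + 2)) → Bool) → F)
    (hf : ∀ s, IsDyck s → weakKer wte m s₁ s * wtVal wt wte (-((m + 2 : ℕ) : ℤ)) s * f s =
      ∑ A ∈ (valleys s).powerset,
        indic ((∀ i ≤ 2 * m, i + 2 ∉ A → pht s₁ i < pht s (i + 2)) ∧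
            ∀ i ≤ 2 * (m + 2), i ∉ A → R i (pht s i))
          (markedWt wt wte (-((m + 2 : ℕ) : ℤ)) s A))
    (hg : ∀ s, IsDyck s → peaks s ⊆ highPeaks s →
      wtHigh wt wte (-((m + 2 : ℕ) : ℤ)) s * g s = ∑ A ∈ (highPeaks s).powerset,
        indic (∀ i ≤ 2 * (m + 2), i ∉ A → R i (pht s i))
          (markedWt wt wte (-((m + 2 : ℕ) : ℤ)) s A)) :
    ∑ s, weakKer wte m s₁ s * dyckWt wt wte (m + 2) s * f s =
      t (m + 2) * ∑ s, strictKer F m s₁ s * dyckWt wt wte (m + 2) s * g s := by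
  have key := sum_valleys_eq_sum_highPeaks h1 (-((m + 2 : ℕ) : ℤ)) (2 * (m + 2))
    fun i h => (∀ j ≤ 2 * m, i = j + 2 → pht s₁ j < h) ∧ R i h
  have hiff (A : Finset ℕ) (s : Fin (2 * (m + 2)) → Bool) :=
    forall_mem_range_iff (A := A) m (fun j h => pht s₁ j < h) R (pht s)
  rw [Finset.mul_sum]
  refine (Finset.sum_congr rfl fun s _ => ?_).trans
    (key.trans (Finset.sum_congr rfl fun s _ => ?_))
  · rw [dyckWt]
    by_cases hs : IsDyck s
    · rw [if_pos hs, indic_of_pos hs, hf s hs]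
      exact Finset.sum_congr rfl fun A _ => indic_congr (hiff A s).symm _
    · rw [if_neg hs, indic_of_neg hs, mul_zero, zero_mul]
  · rw [dyckWt]
    by_cases hs : IsDyck s
    · have hlt {A : Finset ℕ} (hA : A ∈ (highPeaks s).powerset) :
          PathLT m (m + 2) s₁ s ↔ ∀ i ≤ 2 * m, i + 2 ∉ A → pht s₁ i < pht s (i + 2) :=
        pathLT_iff_of_peaks hm ((Finset.mem_powerset.1 hA).trans (Finset.filter_subset _ _))
      rw [if_pos hs, indic_of_pos hs, Finset.sum_congr rfl fun A hA => indic_congr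
        ((hiff A s).trans (and_congr_left' (hlt hA).symm)) _, strictKer]
      simp only [indic_and, sum_indic]
      by_cases h : PathLT m (m + 2) s₁ s
      · have hp := peaks_subset_highPeaks_of_pathLT hm h₁ h
        rw [if_pos h, indic_of_pos h, one_mul, ← mul_assoc, ← h3 _ s hs hp, hg s hs hp]
      · rw [if_neg h, indic_of_neg h, zero_mul, zero_mul, mul_zero]
    · rw [if_neg hs, indic_of_neg hs, mul_zero, zero_mul, mul_zero]

lemma sum_weakKer_mul_strictKer (h2 : ∀ p, wte p ≠ 0) {c : F}
    (h1 : ∀ p, wt p * (wte p - 1) = c) {t : ℕ → F}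
    (h3 : ∀ (j : ℕ) (s : Fin (2 * j) → Bool), IsDyck s → peaks s ⊆ highPeaks s →
      wtHigh wt wte (-(j : ℤ)) s = t j * wtVal wt wte (-(j : ℤ)) s)
    (hm : 0 < m) (h₁ : IsDyck s₁) {s₃ : Fin (2 * (m + 2 + 2)) → Bool} (hs₃ : IsDyck s₃) :
    ∑ s, weakKer wte m s₁ s * dyckWt wt wte (m + 2) s * strictKer F (m + 2) s s₃ =
      t (m + 2) * ∑ s, strictKer F m s₁ s * dyckWt wt wte (m + 2) s *
        weakKer wte (m + 2) s s₃ := by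
  refine sum_weakKer_mul_eq h1 h3 hm h₁ (fun i h => h < pht s₃ (i + 2)) _ _
    (fun s hs => ?_) fun s hs hp => ?_
  · rw [weakKer_mul_wtVal h2 hm h₁ hs, Finset.sum_mul]
    refine Finset.sum_congr rfl fun A hA => ?_
    change _ * indic _ 1 = _
    rw [indic_mul_indic]
    exact indic_congr (and_congr_right'
      (pathLT_iff_of_valleys (Finset.mem_powerset.1 hA))) _
  · exact wtHigh_mul_weakKer h2 (by omega) hs hs₃ hp

lemma sum_weakKer (h2 : ∀ p, wte p ≠ 0) {c : F}
    (h1 : ∀ p, wt p * (wte p - 1) = c) {t : ℕ → F}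
    (h3 : ∀ (j : ℕ) (s : Fin (2 * j) → Bool), IsDyck s → peaks s ⊆ highPeaks s →
      wtHigh wt wte (-(j : ℤ)) s = t j * wtVal wt wte (-(j : ℤ)) s)
    (hm : 0 < m) (h₁ : IsDyck s₁) :
    ∑ s, weakKer wte m s₁ s * dyckWt wt wte (m + 2) s =
      t (m + 2) * ∑ s, strictKer F m s₁ s * dyckWt wt wte (m + 2) s := by
  have := sum_weakKer_mul_eq h1 h3 hm h₁ (fun _ _ => True) (fun _ => 1) (fun _ => 1)
    (fun s hs => ?_) fun s _ _ => ?_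
  · simpa only [mul_one] using this
  · simp only [mul_one, implies_true, and_true]
    exact weakKer_mul_wtVal h2 hm h₁ hs
  · simp only [mul_one, implies_true, indic_of_pos]
    exact wtHigh_eq_sum h2 _ _

end Exchange

/-! ### Chains of paths -/

section Chain

variable {F : Type*} [Field F] {wt wte : ℤ × ℕ → F}

/-- The total weight of the strict chains of `j` paths above a path of half-length `m`. -/
def strictTail (wt wte : ℤ × ℕ → F) : (j m : ℕ) → (Fin (2 * m) → Bool) → F
  | 0, _, _ => 1
  | j + 1, m, s => ∑ s', strictKer F m s s' * dyckWt wt wte (m + 2) s' *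
      strictTail wt wte j (m + 2) s'

lemma sum_weakKer_mul_strictTail (h2 : ∀ p, wte p ≠ 0) {c : F}
    (h1 : ∀ p, wt p * (wte p - 1) = c) {t : ℕ → F}
    (h3 : ∀ (j : ℕ) (s : Fin (2 * j) → Bool), IsDyck s → peaks s ⊆ highPeaks s →
      wtHigh wt wte (-(j : ℤ)) s = t j * wtVal wt wte (-(j : ℤ)) s)
    (j : ℕ) {m : ℕ} (hm : 0 < m) {s : Fin (2 * m) → Bool} (hs : IsDyck s) :
    ∑ s', weakKer wte m s s' * dyckWt wt wte (m + 2) s' * strictTail wt wte j (m + 2) s' =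
      (∏ i ∈ Finset.range (j + 1), t (m + 2 * (i + 1))) * strictTail wt wte (j + 1) m s := by
  induction j generalizing m with
  | zero =>
    simpa [strictTail] using sum_weakKer h2 h1 h3 hm hs
  | succ j ih =>
    have hswap (K K' : ∀ m, (Fin (2 * m) → Bool) → (Fin (2 * (m + 2)) → Bool) → F) :
        ∑ s', K m s s' * dyckWt wt wte (m + 2) s' *
          ∑ s₃, K' (m + 2) s' s₃ * dyckWt wt wte (m + 2 + 2) s₃ *
            strictTail wt wte j (m + 2 + 2) s₃ =
        ∑ s₃, (∑ s', K m s s' * dyckWt wt wte (m + 2) s' * K' (m + 2) s' s₃) *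
          (dyckWt wt wte (m + 2 + 2) s₃ * strictTail wt wte j (m + 2 + 2) s₃) := by
      simp only [Finset.mul_sum, Finset.sum_mul]
      rw [Finset.sum_comm]
      refine Finset.sum_congr rfl fun _ _ => Finset.sum_congr rfl fun _ _ => ?_
      ring
    calc ∑ s', weakKer wte m s s' * dyckWt wt wte (m + 2) s' *
          strictTail wt wte (j + 1) (m + 2) s'
        = t (m + 2) * ∑ s', strictKer F m s s' * dyckWt wt wte (m + 2) s' *
          ∑ s₃, weakKer wte (m + 2) s' s₃ * dyckWt wt wte (m + 2 + 2) s₃ *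
            strictTail wt wte j (m + 2 + 2) s₃ := by
          simp only [strictTail]
          rw [hswap (weakKer wte) (strictKer F), hswap (strictKer F) (weakKer wte),
            Finset.mul_sum]
          refine Finset.sum_congr rfl fun s₃ _ => ?_
          by_cases hs₃ : IsDyck s₃
          · rw [sum_weakKer_mul_strictKer h2 h1 h3 hm hs hs₃, mul_assoc]
          · simp [dyckWt, hs₃]
      _ = t (m + 2) * ∑ s', strictKer F m s s' * dyckWt wt wte (m + 2) s' *
          ((∏ i ∈ Finset.range (j + 1), t (m + 2 + 2 * (i + 1))) *
            strictTail wt wte (j + 1) (m + 2) s') := by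
          congr 1
          refine Finset.sum_congr rfl fun s' _ => ?_
          by_cases hs' : IsDyck s'
          · rw [ih (by omega) hs']
          · simp [dyckWt, hs']
      _ = _ := by
          rw [Finset.prod_range_succ' _ (j + 1), strictTail]
          simp only [Finset.mul_sum]
          refine Finset.sum_congr rfl fun s' _ => ?_
          have : ∏ i ∈ Finset.range (j + 1), t (m + 2 * (i + 1 + 1)) =
              ∏ i ∈ Finset.range (j + 1), t (m + 2 + 2 * (i + 1)) :=
            Finset.prod_congr rfl fun i _ => by congr 1; ring
          rw [this, zero_add, mul_one]
          ring

/-- The sum over all `(k+1)`-tuples of Dyck paths with interaction `K` and end weight `f`. -/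
def chainSum (wt wte : ℤ × ℕ → F)
    (K : ∀ m, (Fin (2 * m) → Bool) → (Fin (2 * (m + 2)) → Bool) → F) (n k : ℕ)
    (f : (Fin (2 * (n + 2 * k)) → Bool) → F) : F :=
  ∑ D : DyckTuple n (k + 1), (∏ i : Fin (k + 1), dyckWt wt wte (n + 2 * (i : ℕ)) (D i)) *
    (∏ j : Fin k, K (n + 2 * (j : ℕ)) (D j.castSucc) (D j.succ)) * f (D (Fin.last k))

variable (K : ∀ m, (Fin (2 * m) → Bool) → (Fin (2 * (m + 2)) → Bool) → F)

lemma chainSum_succ (n k : ℕ) (f : (Fin (2 * (n + 2 * (k + 1))) → Bool) → F) :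
    chainSum wt wte K n (k + 1) f = chainSum wt wte K n k fun s =>
      ∑ s', K (n + 2 * k) s s' * dyckWt wt wte (n + 2 * k + 2) s' * f s' := by
  let α : Fin (k + 1 + 1) → Type := fun i => Fin (2 * (n + 2 * (i : ℕ))) → Bool
  rw [chainSum, ← Equiv.sum_comp (Fin.snocEquiv α), Fintype.sum_prod_type, Finset.sum_comm]
  refine Finset.sum_congr rfl fun D _ => ?_
  rw [Finset.mul_sum]
  refine Finset.sum_congr rfl fun s' _ => ?_
  have hc (i : Fin (k + 1)) : Fin.snocEquiv α (s', D) i.castSucc = D i :=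
    Fin.snoc_castSucc (α := α) s' D i
  have hl : Fin.snocEquiv α (s', D) (Fin.last (k + 1)) = s' := Fin.snoc_last (α := α) s' D
  have hdyck : ∏ i : Fin (k + 1 + 1),
      dyckWt wt wte (n + 2 * (i : ℕ)) (Fin.snocEquiv α (s', D) i) =
      (∏ i : Fin (k + 1), dyckWt wt wte (n + 2 * (i : ℕ)) (D i)) *
        dyckWt wt wte (n + 2 * k + 2) s' :=
    (Fin.prod_univ_castSucc _).trans (congrArg₂ (· * ·)
      (Finset.prod_congr rfl fun i _ => congrArg (dyckWt wt wte (n + 2 * (i : ℕ))) (hc i))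
      (congrArg (dyckWt wt wte (n + 2 * k + 2)) hl))
  have hker : ∏ j : Fin (k + 1), K (n + 2 * (j : ℕ)) (Fin.snocEquiv α (s', D) j.castSucc)
        (Fin.snocEquiv α (s', D) j.succ) =
      (∏ j : Fin k, K (n + 2 * (j : ℕ)) (D j.castSucc) (D j.succ)) *
        K (n + 2 * k) (D (Fin.last k)) s' :=
    (Fin.prod_univ_castSucc _).trans (congrArg₂ (· * ·)
      (Finset.prod_congr rfl fun j _ =>
        congrArg₂ (K (n + 2 * (j : ℕ))) (hc j.castSucc) (hc j.succ))
      (congrArg₂ (K (n + 2 * k)) (hc (Fin.last k)) hl))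
  rw [hdyck, hker, hl]
  ring

lemma chainSum_congr {n k : ℕ} {f g : (Fin (2 * (n + 2 * k)) → Bool) → F}
    (h : ∀ s, IsDyck s → f s = g s) :
    chainSum wt wte K n k f = chainSum wt wte K n k g := by
  refine Finset.sum_congr rfl fun D _ => ?_
  by_cases hD : IsDyck (D (Fin.last k))
  · rw [h _ hD]
  · have h0 : ∏ i : Fin (k + 1), dyckWt wt wte (n + 2 * (i : ℕ)) (D i) = 0 :=
      Finset.prod_eq_zero (Finset.mem_univ (Fin.last k)) (if_neg hD)
    rw [h0, zero_mul, zero_mul, zero_mul]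

lemma chainSum_const_mul (n k : ℕ) (a : F) (f : (Fin (2 * (n + 2 * k)) → Bool) → F) :
    chainSum wt wte K n k (fun s => a * f s) = a * chainSum wt wte K n k f := by
  simp only [chainSum, Finset.mul_sum]
  exact Finset.sum_congr rfl fun D _ => by ring

lemma chainSum_zero (n : ℕ) (K' : ∀ m, (Fin (2 * m) → Bool) → (Fin (2 * (m + 2)) → Bool) → F)
    (f : (Fin (2 * (n + 2 * 0)) → Bool) → F) :
    chainSum wt wte K n 0 f = chainSum wt wte K' n 0 f := by
  simp [chainSum]

lemma chainSum_strictKer_succ (n k j : ℕ) :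
    chainSum wt wte (strictKer F) n (k + 1) (strictTail wt wte j (n + 2 * (k + 1))) =
      chainSum wt wte (strictKer F) n k (strictTail wt wte (j + 1) (n + 2 * k)) :=
  chainSum_succ _ _ _ _

lemma chainSum_weakKer_eq (h2 : ∀ p, wte p ≠ 0) {c : F}
    (h1 : ∀ p, wt p * (wte p - 1) = c) {t : ℕ → F}
    (h3 : ∀ (j : ℕ) (s : Fin (2 * j) → Bool), IsDyck s → peaks s ⊆ highPeaks s →
      wtHigh wt wte (-(j : ℤ)) s = t j * wtVal wt wte (-(j : ℤ)) s)
    {n : ℕ} (hn : 0 < n) (k j : ℕ) :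
    chainSum wt wte (weakKer wte) n k (strictTail wt wte j (n + 2 * k)) =
      (∏ i ∈ Finset.range (k + j), t (n + 2 * (i + 1)) ^ min (i + 1) k) *
        chainSum wt wte (strictKer F) n k (strictTail wt wte j (n + 2 * k)) := by
  induction k generalizing j with
  | zero => simpa using chainSum_zero (weakKer wte) n (strictKer F) _
  | succ k ih =>
    have hstep : chainSum wt wte (weakKer wte) n (k + 1)
          (strictTail wt wte j (n + 2 * (k + 1))) =
        (∏ i ∈ Finset.range (j + 1), t (n + 2 * k + 2 * (i + 1))) *
          chainSum wt wte (weakKer wte) n k (strictTail wt wte (j + 1) (n + 2 * k)) := by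
      rw [← chainSum_const_mul, chainSum_succ]
      exact chainSum_congr _ fun s hs =>
        sum_weakKer_mul_strictTail h2 h1 h3 j (by omega) hs
    have hexp : (∏ i ∈ Finset.range (j + 1), t (n + 2 * k + 2 * (i + 1))) *
          ∏ i ∈ Finset.range (k + (j + 1)), t (n + 2 * (i + 1)) ^ min (i + 1) k =
        ∏ i ∈ Finset.range (k + (j + 1)), t (n + 2 * (i + 1)) ^ min (i + 1) (k + 1) := by
      rw [Finset.prod_range_add _ k, Finset.prod_range_add _ k, mul_left_comm,
        ← Finset.prod_mul_distrib]
      congr 1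
      · refine Finset.prod_congr rfl fun i hi => ?_
        have := Finset.mem_range.mp hi
        rw [min_eq_left (by omega), min_eq_left (by omega)]
      · refine Finset.prod_congr rfl fun i _ => ?_
        rw [min_eq_right (by omega), min_eq_right (by omega), pow_succ',
          show n + 2 * (k + i + 1) = n + 2 * k + 2 * (i + 1) by ring]
    rw [hstep, ih, chainSum_strictKer_succ, ← mul_assoc, hexp, add_assoc k 1, add_comm 1 j]

end Chain

section Tuples

variable {F : Type*} [Field F] (wt wte : ℤ × ℕ → F)

lemma prod_dyckWt (n k : ℕ) (D : DyckTuple n k) :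
    ∏ i : Fin k, dyckWt wt wte (n + 2 * (i : ℕ)) (D i) =
      if ∀ i : Fin k, IsDyck (D i) then
        ∏ i : Fin k, wtVal wt wte (-(n : ℤ) - 2 * (i : ℕ)) (D i) else 0 := by
  by_cases hD : ∀ i : Fin k, IsDyck (D i)
  · rw [if_pos hD]
    refine Finset.prod_congr rfl fun i _ => ?_
    rw [dyckWt, if_pos (hD i)]
    congr 1
    push_cast
    ring
  · rw [if_neg hD]
    obtain ⟨i, hi⟩ := not_forall.mp hD
    exact Finset.prod_eq_zero (Finset.mem_univ i) (if_neg hi)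

lemma strictSum_succ_eq_chainSum (n k : ℕ) :
    strictSum wt wte n (k + 1) = chainSum wt wte (strictKer F) n k fun _ => 1 := by
  rw [strictSum, strictTuples, Finset.sum_filter]
  refine Finset.sum_congr rfl fun D _ => ?_
  rw [prod_dyckWt, mul_one]
  by_cases hD : ∀ i : Fin (k + 1), IsDyck (D i)
  · rw [if_pos hD]
    by_cases hlt : ∀ (i : ℕ) (h : i + 1 < k + 1),
        PathLT (n + 2 * i) (n + 2 * (i + 1)) (D ⟨i, by omega⟩) (D ⟨i + 1, h⟩)
    · rw [if_pos ⟨hD, hlt⟩, Finset.prod_eq_one (s := (Finset.univ : Finset (Fin k)))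
        (fun j _ => if_pos (hlt j (by omega))), mul_one]
    · rw [if_neg fun h => hlt h.2]
      simp only [not_forall] at hlt
      obtain ⟨i, hi, hnot⟩ := hlt
      rw [Finset.prod_eq_zero (s := Finset.univ) (Finset.mem_univ (⟨i, by omega⟩ : Fin k))
        (if_neg hnot), mul_zero]
  · rw [if_neg hD, if_neg fun h => hD h.1, zero_mul]

lemma weakSum_succ_eq_chainSum (n k : ℕ) :
    weakSum wt wte n (k + 1) = chainSum wt wte (weakKer wte) n k fun _ => 1 := by
  rw [weakSum, weakTuples, Finset.sum_filter]
  refine Finset.sum_congr rfl fun D _ => ?_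
  rw [prod_dyckWt, mul_one]
  by_cases hD : ∀ i : Fin (k + 1), IsDyck (D i)
  · rw [if_pos hD]
    by_cases hle : ∀ (i : ℕ) (h : i + 1 < k + 1),
        PathLE (n + 2 * i) (n + 2 * (i + 1)) (D ⟨i, by omega⟩) (D ⟨i + 1, h⟩)
    · rw [if_pos ⟨hD, hle⟩]
      exact congrArg _ (Finset.prod_congr rfl fun j _ => (if_pos (hle j (by omega))).symm)
    · rw [if_neg fun h => hle h.2]
      simp only [not_forall] at hle
      obtain ⟨i, hi, hnot⟩ := hle
      rw [Finset.prod_eq_zero (s := Finset.univ) (Finset.mem_univ (⟨i, by omega⟩ : Fin k))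
        (if_neg hnot), mul_zero]
  · rw [if_neg hD, if_neg fun h => hD h.1, zero_mul]

end Tuples

theorem statement_13 {F : Type*} [Field F] (wt wte : ℤ × ℕ → F) (c : F)
    (h1 : ∀ p, wt p * (wte p - 1) = c) (h2 : ∀ p, wte p ≠ 0)
    (t : ℕ → F)
    (h3 : ∀ (j : ℕ) (s : Fin (2 * j) → Bool), IsDyck s → peaks s ⊆ highPeaks s →
      wtHigh wt wte (-(j : ℤ)) s = t j * wtVal wt wte (-(j : ℤ)) s)
    (n k : ℕ) (hn : 0 < n) (hk : 0 < k) :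
    weakSum wt wte n k =
      (∏ i ∈ Finset.Icc 1 (k - 1), t (n + 2 * i) ^ i) * strictSum wt wte n k := by
  obtain ⟨k, rfl⟩ := Nat.exists_eq_add_one.mpr hk
  rw [weakSum_succ_eq_chainSum, strictSum_succ_eq_chainSum, Nat.add_sub_cancel,
    ← Finset.Ico_add_one_right_eq_Icc, Finset.prod_Ico_eq_prod_range, Nat.add_sub_cancel]
  refine (chainSum_weakKer_eq h2 h1 h3 hn k 0).trans ?_
  refine congrArg (· * _) (Finset.prod_congr rfl fun i hi => ?_)
  rw [min_eq_left (Finset.mem_range.mp hi), add_comm 1 i]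

end Paper
end
end
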